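/- arXiv:1602.03964 — 4 statements merged into one kernel-verified Lean document; each statement's English description precedes it below -/
import Mathlib

section
/- Let A be a complex unital semisimple Banach algebra and let B be a complex unital Banach algebra possessing a separating family of finite-dimensional irreducible representations (i.e., there is a family of continuous unital surjective algebra homomorphisms π_i : B → M_{n_i}(ℂ) whose kernels have trivial intersection). If T : A → B is a linear, unital, surjective map satisfying ρ(T(a)) = ρ(a) for every a ∈ A (where ρ denotes the spectral radius), then T is a Jordan morphism, i.e., T(a²) = T(a)² for all a ∈ A. -/
section MatrixLemmas

variable {m : Type*} [Fintype m] [DecidableEq m]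

theorem single_one_mul_apply (i j p q : m) (x : Matrix m m ℂ) :
    (Matrix.single i j (1 : ℂ) * x : Matrix m m ℂ) p q = if p = i then x j q else 0 := by
  split_ifs with h
  · subst h; simp
  · simp [h]

theorem mul_single_one_apply (i j p q : m) (x : Matrix m m ℂ) :
    (x * Matrix.single i j (1 : ℂ) : Matrix m m ℂ) p q = if q = j then x p i else 0 := by
  split_ifs with h
  · subst h; simp
  · simp [h]

/-- Full matrix algebras are prime. -/
theorem Matrix.eq_zero_or_eq_zero_of_mul_mul_eq_zero {p q : Matrix m m ℂ}
    (h : ∀ z, p * z * q = 0) : p = 0 ∨ q = 0 := by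
  by_contra! hne
  obtain ⟨⟨i, j, hp⟩, k, l, hq⟩ :
      (∃ i j, p i j ≠ 0) ∧ ∃ k l, q k l ≠ 0 := by
    refine ⟨?_, ?_⟩
    · by_contra! h0; exact hne.1 (Matrix.ext h0)
    · by_contra! h0; exact hne.2 (Matrix.ext h0)
  have := congrFun (congrFun (h (Matrix.single j k 1)) i) l
  rw [mul_assoc, Matrix.mul_apply] at this
  simp [single_one_mul_apply, hp, hq] at this

/-- A linear map skew for the trace form. -/
theorem trace_mul_map_eq_neg {D : Matrix m m ℂ →ₗ[ℂ] Matrix m m ℂ}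
    (h2 : ∀ u, (u * D u).trace = 0) (u v : Matrix m m ℂ) :
    (u * D v).trace = -(D u * v).trace := by
  have := h2 (u + v)
  simp only [map_add, mul_add, add_mul, Matrix.trace_add, h2] at this
  rw [Matrix.trace_mul_comm (D u) v]
  linear_combination this

theorem map_jordan_of_trace_eq_zero {D : Matrix m m ℂ →ₗ[ℂ] Matrix m m ℂ}
    (h2 : ∀ u, (u * D u).trace = 0) (h3 : ∀ u, (u * u * D u).trace = 0)
    (u v : Matrix m m ℂ) :
    D (u * v + v * u) = u * D v + D v * u + (v * D u + D u * v) := by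
  rw [Matrix.ext_iff_trace_mul_left]
  intro w
  have e1 := h3 (u + v + w)
  have e2 := h3 (u + v)
  have e3 := h3 (u + w)
  have e4 := h3 (v + w)
  have e5 := h3 u
  have e6 := h3 v
  have e7 := h3 w
  rw [trace_mul_map_eq_neg h2, Matrix.trace_mul_comm]
  simp only [map_add, mul_add, add_mul, Matrix.trace_add] at *
  have c1 : (w * (u * D v)).trace = (w * u * D v).trace := by rw [mul_assoc]
  have c2 : (w * (v * D u)).trace = (w * v * D u).trace := by rw [mul_assoc]
  have c3 : (w * (D v * u)).trace = (u * w * D v).trace := by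
    rw [← mul_assoc, Matrix.trace_mul_comm, mul_assoc]
  have c4 : (w * (D u * v)).trace = (v * w * D u).trace := by
    rw [← mul_assoc, Matrix.trace_mul_comm, mul_assoc]
  rw [c1, c2, c3, c4]
  linear_combination (-1 : ℂ) * e1 + e2 + e3 + e4 - e5 - e6 - e7

/-- A linear map of a full matrix algebra which infinitesimally preserves `tr (u ^ 2)` and
`tr (u ^ 3)` and annihilates the identity is an inner derivation. -/
theorem exists_commutator_of_trace_eq_zero [Nonempty m] {D : Matrix m m ℂ →ₗ[ℂ] Matrix m m ℂ}
    (h1 : D 1 = 0) (h2 : ∀ u, (u * D u).trace = 0) (h3 : ∀ u, (u * u * D u).trace = 0) :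
    ∃ h, ∀ y, D y = h * y - y * h := by
  have hentry : ∀ z j q, D z j q = -(D (Matrix.single q j 1) * z).trace := by
    intro z j q
    rw [← trace_mul_map_eq_neg h2, Matrix.trace]
    simp [single_one_mul_apply]
  have htr : ∀ (x : Matrix m m ℂ) i j, (x * Matrix.single i j 1).trace = x j i := by
    intro x i j
    rw [Matrix.trace]
    simp [mul_single_one_apply]
  let R : Matrix m m ℂ := ∑ i, ∑ j, Matrix.single i j 1 * D (Matrix.single j i 1)
  refine ⟨-(Fintype.card m : ℂ)⁻¹ • R, fun y => ?_⟩
  have hc : ∑ i, ∑ j, Matrix.single i j 1 * D (y * Matrix.single j i 1) =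
      -∑ i, ∑ j, D (Matrix.single i j 1) * (y * Matrix.single j i 1) := by
    ext p q
    simp only [Matrix.sum_apply, Matrix.neg_apply, single_one_mul_apply, ← mul_assoc,
      mul_single_one_apply]
    simp [hentry (y * _), ← mul_assoc, htr]
  have hd : ∑ i, ∑ j, D (y * Matrix.single j i 1) * Matrix.single i j 1 =
      -(R * y) := by
    ext p q
    simp only [R, Finset.sum_mul, Matrix.sum_apply, Matrix.neg_apply, single_one_mul_apply,
      mul_assoc, mul_single_one_apply]
    simp [hentry (y * _), ← mul_assoc, htr]
  have hsum : ∑ i, ∑ j, (Matrix.single i j 1 * (y * Matrix.single j i 1) +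
      y * Matrix.single j i 1 * Matrix.single i j 1) =
      y.trace • (1 : Matrix m m ℂ) + (Fintype.card m : ℂ) • y := by
    ext p q
    simp only [Matrix.sum_apply, Matrix.add_apply, Finset.sum_add_distrib, ← mul_assoc,
      mul_single_one_apply]
    simp only [single_one_mul_apply, Matrix.smul_apply, Matrix.one_apply, Matrix.trace,
      Matrix.diag]
    simp
  have key := congrArg D hsum
  simp only [map_sum, map_jordan_of_trace_eq_zero h2 h3] at key
  simp only [Finset.sum_add_distrib, hc, hd, map_add, map_smul, h1] at key
  have hR : ∑ i, ∑ j, y * Matrix.single j i 1 * D (Matrix.single i j 1) = y * R := by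
    simp only [R, Finset.mul_sum, mul_assoc]
    rw [Finset.sum_comm]
  rw [hR] at key
  have hcard : (Fintype.card m : ℂ) ≠ 0 := by exact_mod_cast Fintype.card_ne_zero
  have : (Fintype.card m : ℂ) • D y = y * R - R * y := by
    rw [smul_zero, zero_add] at key
    rw [← key]; abel
  calc D y = (Fintype.card m : ℂ)⁻¹ • ((Fintype.card m : ℂ) • D y) := by
        rw [smul_smul, inv_mul_cancel₀ hcard, one_smul]
    _ = _ := by
        rw [this, smul_sub, neg_smul, neg_mul, mul_neg, smul_mul_assoc, mul_smul_comm]; abel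

end MatrixLemmas

/-- Brešar's identity for biderivations. -/
theorem biderivation_mul_commutator {R : Type*} [Ring R] {Δ : R → R → R}
    (hl : ∀ u v w, Δ (u * v) w = Δ u w * v + u * Δ v w)
    (hr : ∀ u v w, Δ u (v * w) = Δ u v * w + v * Δ u w) (x y z u v : R) :
    Δ x y * z * (u * v - v * u) = (x * y - y * x) * z * Δ u v := by
  have key : ∀ x y u v, Δ x y * (u * v - v * u) = (x * y - y * x) * Δ u v := by
    intro x y u v
    have h1 : Δ (x * u) (y * v) =
        (Δ x y * v + y * Δ x v) * u + x * (Δ u y * v + y * Δ u v) := by rw [hl, hr, hr]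
    have h2 : Δ (x * u) (y * v) =
        (Δ x y * u + x * Δ u y) * v + y * (Δ x v * u + x * Δ u v) := by rw [hr, hl, hl]
    have h3 := h1.symm.trans h2
    rw [← sub_eq_zero] at h3 ⊢
    rw [← neg_eq_zero, ← h3]
    noncomm_ring
  have h1 := key x y (z * u) v
  have h2 := key x y z v
  rw [hl] at h1
  have h3 : Δ x y * (z * u * v - v * (z * u)) =
      Δ x y * z * (u * v - v * u) + Δ x y * (z * v - v * z) * u := by noncomm_ring
  rw [h3, h2] at h1
  have h4 : (x * y - y * x) * (Δ z v * u + z * Δ u v) =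
      (x * y - y * x) * z * Δ u v + (x * y - y * x) * Δ z v * u := by noncomm_ring
  rw [h4] at h1
  exact add_right_cancel h1

section Bracket

variable {A : Type*} [Ring A] [Algebra ℂ A] {m : Type*} [Fintype m] [DecidableEq m]
  {φ : A →ₗ[ℂ] Matrix m m ℂ}

/-- If `φ` intertwines every inner derivation of `A` with an inner derivation of the matrix
algebra, then the bracket it induces is a biderivation, so it satisfies Brešar's identity. -/
theorem bracket_mul_commutator (hφ : Function.Surjective φ)
    (hin : ∀ x, ∃ h, ∀ a, φ (x * a - a * x) = h * φ a - φ a * h)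
    (x y u v : A) (z : Matrix m m ℂ) :
    φ (x * y - y * x) * z * (φ u * φ v - φ v * φ u) =
      (φ x * φ y - φ y * φ x) * z * φ (u * v - v * u) := by
  choose h hh using hin
  choose s hs using hφ
  have hneg : ∀ x a, φ (x * a - a * x) = φ x * h a - h a * φ x := by
    intro x a
    rw [← neg_sub (a * x), map_neg, hh, neg_sub]
  let Δ : Matrix m m ℂ → Matrix m m ℂ → Matrix m m ℂ := fun p q => h (s p) * q - q * h (s p)
  have hΔ : ∀ x a, Δ (φ x) (φ a) = φ (x * a - a * x) := by
    intro x a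
    change h (s (φ x)) * φ a - φ a * h (s (φ x)) = _
    rw [← hh, hneg, hs, ← hneg]
  have hr : ∀ p q r, Δ p (q * r) = Δ p q * r + q * Δ p r := by
    intro p q r
    simp only [Δ]
    noncomm_ring
  have hanti : ∀ p q, Δ p q = -Δ q p := by
    intro p q
    rw [← hs p, ← hs q, hΔ, hΔ, ← map_neg, neg_sub]
  have hl : ∀ p q r, Δ (p * q) r = Δ p r * q + p * Δ q r := by
    intro p q r
    rw [hanti, hr, hanti p, hanti q]
    noncomm_ring
  simpa only [hΔ] using biderivation_mul_commutator hl hr (φ x) (φ y) z (φ u) (φ v)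

theorem bracket_eq_zero_of_commute (hφ : Function.Surjective φ)
    (hin : ∀ x, ∃ h, ∀ a, φ (x * a - a * x) = h * φ a - φ a * h)
    {x y : A} (hxy : φ x * φ y = φ y * φ x) : φ (x * y - y * x) = 0 := by
  by_cases hc : ∀ u v, φ u * φ v - φ v * φ u = 0
  · obtain ⟨h, hh⟩ := hin x
    obtain ⟨w, rfl⟩ := hφ h
    rw [hh, hc]
  · push Not at hc
    obtain ⟨u, v, huv⟩ := hc
    refine (Matrix.eq_zero_or_eq_zero_of_mul_mul_eq_zero fun z => ?_).resolve_right huv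
    rw [bracket_mul_commutator hφ hin, hxy, sub_self, zero_mul, zero_mul]

theorem bracket_dichotomy (hφ : Function.Surjective φ)
    (hin : ∀ x, ∃ h, ∀ a, φ (x * a - a * x) = h * φ a - φ a * h) :
    (∀ x y, φ (x * y - y * x) = 0) ∨
      ∀ x y, φ (x * y - y * x) = 0 → φ x * φ y = φ y * φ x := by
  by_contra! hcon
  obtain ⟨⟨u, v, huv⟩, x, y, hxy, hne⟩ := hcon
  refine huv ((Matrix.eq_zero_or_eq_zero_of_mul_mul_eq_zero fun z => ?_).resolve_left
    (sub_ne_zero.mpr hne))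
  rw [← bracket_mul_commutator hφ hin, hxy, zero_mul, zero_mul]

end Bracket

section Diagonal

variable {m : Type*} [Fintype m] [DecidableEq m]

theorem eq_zero_of_commute_diagonal {d : m → ℂ} (hd : Function.Injective d)
    {q : Matrix m m ℂ} (hq : q * Matrix.diagonal d = Matrix.diagonal d * q)
    (hn : IsNilpotent q) : q = 0 := by
  have hoff : ∀ i j, i ≠ j → q i j = 0 := by
    intro i j hij
    have h := congrFun (congrFun hq i) j
    rw [Matrix.mul_diagonal, Matrix.diagonal_mul, mul_comm, ← sub_eq_zero, ← sub_mul] at h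
    exact (mul_eq_zero.mp h).resolve_left (sub_ne_zero.mpr fun e => hij (hd e).symm)
  have hdiag : q = Matrix.diagonal fun i => q i i := by
    ext i j
    by_cases hij : i = j
    · subst hij; simp
    · rw [hoff i j hij, Matrix.diagonal_apply_ne _ hij]
  obtain ⟨k, hk⟩ := hn
  rw [hdiag, Matrix.diagonal_pow] at hk
  rw [hdiag]
  ext i j
  have := congrFun (congrFun hk i) i
  simp only [Matrix.diagonal_apply_eq, Pi.pow_apply, Matrix.zero_apply] at this
  by_cases hij : i = j
  · subst hij; simpa using eq_zero_of_pow_eq_zero this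
  · simp [hij]

theorem pow_card_eq_zero_of_spectrum_subset {q : Matrix m m ℂ}
    (h : ∀ z ∈ spectrum ℂ q, z = 0) : q ^ Fintype.card m = 0 := by
  have hs := IsAlgClosed.splits q.charpoly
  have hroots : q.charpoly.roots = Multiset.replicate (Fintype.card m) 0 := by
    rw [Multiset.eq_replicate]
    refine ⟨?_, fun z hz => h z ?_⟩
    · rw [← hs.natDegree_eq_card_roots, Matrix.charpoly_natDegree_eq_dim]
    · rw [Matrix.mem_spectrum_iff_isRoot_charpoly]
      exact Polynomial.isRoot_of_mem_roots hz
  have hX : q.charpoly = Polynomial.X ^ Fintype.card m := by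
    rw [hs.eq_prod_roots_of_monic (Matrix.charpoly_monic q), hroots]
    simp
  simpa [hX] using Matrix.aeval_self_charpoly q

/-- A quadratic expression `q₀ + s q₁ + s² q₂` which is nilpotent and commutes with `d + s e` for
every `s`, where `d` is diagonal with distinct entries, vanishes. -/
theorem eq_zero_of_quadratic_commute {d : m → ℂ} (hd : Function.Injective d)
    {e q₀ q₁ q₂ : Matrix m m ℂ}
    (hcomm : ∀ s : ℂ, (q₀ + s • q₁ + s ^ 2 • q₂) * (Matrix.diagonal d + s • e) =
      (Matrix.diagonal d + s • e) * (q₀ + s • q₁ + s ^ 2 • q₂))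
    (hnil : ∀ s : ℂ, (q₀ + s • q₁ + s ^ 2 • q₂) ^ Fintype.card m = 0)
    (hq₂ : IsNilpotent q₂) : q₂ = 0 := by
  have h0 : q₀ = 0 :=
    eq_zero_of_commute_diagonal hd (by simpa using hcomm 0) ⟨_, by simpa using hnil 0⟩
  subst h0
  have hpoly : ∀ s : ℂ, s ≠ 0 →
      (q₁ * Matrix.diagonal d - Matrix.diagonal d * q₁) +
        s • (q₁ * e - e * q₁ + (q₂ * Matrix.diagonal d - Matrix.diagonal d * q₂)) +
        s ^ 2 • (q₂ * e - e * q₂) = 0 := by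
    intro s hs
    have h := sub_eq_zero.mpr (hcomm s)
    have h' : s • ((q₁ * Matrix.diagonal d - Matrix.diagonal d * q₁) +
        s • (q₁ * e - e * q₁ + (q₂ * Matrix.diagonal d - Matrix.diagonal d * q₂)) +
        s ^ 2 • (q₂ * e - e * q₂)) = 0 := by
      rw [← h]
      simp only [zero_add, add_mul, mul_add, smul_mul_assoc, mul_smul_comm, smul_add, smul_sub,
        smul_smul]
      module
    exact (smul_eq_zero.mp h').resolve_left hs
  have p1 := hpoly 1 one_ne_zero
  have p2 := hpoly (-1) (by norm_num)
  have p3 := hpoly 2 two_ne_zero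
  have hc1 : q₁ * Matrix.diagonal d - Matrix.diagonal d * q₁ = 0 := by
    linear_combination (norm := module) p1 + (1 / 3 : ℂ) • p2 - (1 / 3 : ℂ) • p3
  have hc2 : q₁ * e - e * q₁ + (q₂ * Matrix.diagonal d - Matrix.diagonal d * q₂) = 0 := by
    linear_combination (norm := module) (1 / 2 : ℂ) • p1 - (1 / 2 : ℂ) • p2
  have hpow : ∀ s : ℂ, (q₁ + s • q₂) ^ Fintype.card m = 0 := by
    have hcont : Continuous fun s : ℂ => (q₁ + s • q₂) ^ Fintype.card m := by fun_prop
    refine fun s => congrFun (hcont.ext_on (dense_compl_singleton (0 : ℂ))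
      (continuous_const (y := (0 : Matrix m m ℂ))) fun s hs => ?_) s
    have h := hnil s
    rw [show (0 : Matrix m m ℂ) + s • q₁ + s ^ 2 • q₂ = s • (q₁ + s • q₂) by module,
      smul_pow] at h
    exact (smul_eq_zero.mp h).resolve_left (pow_ne_zero _ hs)
  have h1 : q₁ = 0 :=
    eq_zero_of_commute_diagonal hd (sub_eq_zero.mp hc1) ⟨_, by simpa using hpow 0⟩
  subst h1
  exact eq_zero_of_commute_diagonal hd (sub_eq_zero.mp (by simpa using hc2)) hq₂

end Diagonal

section Spectral

variable {A : Type*} [NormedRing A] [NormedAlgebra ℂ A]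

/-- The orbit of `a` under the one-parameter group of inner automorphisms generated by `x`. -/
noncomputable def expConj (x a : A) (t : ℂ) : A :=
  NormedSpace.exp (t • x) * a * NormedSpace.exp (t • -x)

theorem expConj_zero (x a : A) : expConj x a 0 = a := by
  simp [expConj]

variable [CompleteSpace A]

theorem spectralRadius_le_ofReal (a : A) :
    spectralRadius ℂ a ≤ ENNReal.ofReal (‖a‖ * ‖(1 : A)‖) := by
  refine iSup₂_le fun z hz => ?_
  rw [← enorm_eq_nnnorm, ← ofReal_norm]
  exact ENNReal.ofReal_le_ofReal (spectrum.norm_le_norm_mul_of_mem hz)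

theorem spectralRadius_ne_top (a : A) : spectralRadius ℂ a ≠ ⊤ :=
  ne_top_of_le_ne_top ENNReal.ofReal_ne_top (spectralRadius_le_ofReal a)

theorem toReal_spectralRadius_le (a : A) : (spectralRadius ℂ a).toReal ≤ ‖a‖ * ‖(1 : A)‖ :=
  ENNReal.toReal_le_of_le_ofReal (by positivity) (spectralRadius_le_ofReal a)

theorem norm_le_toReal_of_mem_spectrum {R : Type*} [Ring R] [Algebra ℂ R] {b : R} {r : ENNReal}
    (hr : r ≠ ⊤) (h : spectralRadius ℂ b ≤ r) {z : ℂ} (hz : z ∈ spectrum ℂ b) :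
    ‖z‖ ≤ r.toReal := by
  have h1 : (‖z‖₊ : ENNReal) ≤ r := (le_iSup₂ (α := ENNReal) z hz).trans h
  simpa using ENNReal.toReal_mono hr h1

variable {m : Type*} [Fintype m] [DecidableEq m]

theorem norm_trace_pow_le {M : Matrix m m ℂ} {r : ℝ} (h : ∀ z ∈ spectrum ℂ M, ‖z‖ ≤ r)
    {k : ℕ} (hk : 0 < k) : ‖(M ^ k).trace‖ ≤ Fintype.card m * r ^ k := by
  rw [Matrix.trace_eq_sum_roots_charpoly]
  refine (norm_multiset_sum_le _).trans ?_
  have hcard : Multiset.card ((M ^ k).charpoly.roots.map fun z => ‖z‖) = Fintype.card m := by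
    rw [Multiset.card_map, ← (IsAlgClosed.splits _).natDegree_eq_card_roots,
      Matrix.charpoly_natDegree_eq_dim]
  rw [← hcard, ← nsmul_eq_mul]
  refine Multiset.sum_le_card_nsmul _ _ fun x hx => ?_
  obtain ⟨z, hz, rfl⟩ := Multiset.mem_map.mp hx
  have hz' : z ∈ spectrum ℂ (M ^ k) :=
    Matrix.mem_spectrum_iff_isRoot_charpoly.mpr (Polynomial.isRoot_of_mem_roots hz)
  rw [spectrum.map_pow_of_pos _ hk] at hz'
  obtain ⟨w, hw, rfl⟩ := hz'
  simpa using pow_le_pow_left₀ (norm_nonneg w) (h w hw) k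

variable {φ : A →ₗ[ℂ] Matrix m m ℂ}

/-- A map into matrices which does not increase the spectral radius has bounded power traces. -/
theorem norm_trace_pow_map_le (hφ : ∀ a, spectralRadius ℂ (φ a) ≤ spectralRadius ℂ a)
    (a : A) {k : ℕ} (hk : 0 < k) :
    ‖(φ a ^ k).trace‖ ≤ Fintype.card m * (spectralRadius ℂ a).toReal ^ k :=
  norm_trace_pow_le
    (fun _ hz => norm_le_toReal_of_mem_spectrum (spectralRadius_ne_top a) (hφ a) hz) hk

theorem continuous_of_spectralRadius_le (hsurj : Function.Surjective φ)
    (hφ : ∀ a, spectralRadius ℂ (φ a) ≤ spectralRadius ℂ a) : Continuous φ := by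
  have hb : ∀ a, ‖(φ a * φ a).trace‖ ≤ Fintype.card m * (‖a‖ * ‖(1 : A)‖) ^ 2 := by
    intro a
    rw [← pow_two]
    refine (norm_trace_pow_map_le hφ a two_pos).trans ?_
    gcongr
    exact toReal_spectralRadius_le a
  have hcont : ∀ b, Continuous fun a => (φ a * φ b).trace := by
    intro b
    let l : A →ₗ[ℂ] ℂ :=
      (Matrix.traceLinearMap m ℂ ℂ).comp ((LinearMap.mulRight ℂ (φ b)).comp φ)
    have hl : ∀ z ∈ Metric.closedBall (0 : A) 1,
        ‖l z‖ ≤ Fintype.card m * ((1 + ‖b‖) * ‖(1 : A)‖) ^ 2 := by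
      intro z hz
      rw [mem_closedBall_zero_iff] at hz
      have e : (4 : ℂ) * l z =
          (φ (z + b) * φ (z + b)).trace - (φ (z - b) * φ (z - b)).trace := by
        change 4 * (φ z * φ b).trace = _
        simp only [map_add, map_sub, add_mul, mul_add, sub_mul, mul_sub, Matrix.trace_add,
          Matrix.trace_sub, Matrix.trace_mul_comm (φ b) (φ z)]
        ring
      have h1 : ‖(φ (z + b) * φ (z + b)).trace‖ ≤
          Fintype.card m * ((1 + ‖b‖) * ‖(1 : A)‖) ^ 2 := by
        refine (hb _).trans ?_
        gcongr
        exact (norm_add_le _ _).trans (by gcongr)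
      have h2 : ‖(φ (z - b) * φ (z - b)).trace‖ ≤
          Fintype.card m * ((1 + ‖b‖) * ‖(1 : A)‖) ^ 2 := by
        refine (hb _).trans ?_
        gcongr
        exact (norm_sub_le _ _).trans (by gcongr)
      have h3 : ‖(4 : ℂ) * l z‖ ≤ _ := e ▸ norm_sub_le _ _
      rw [norm_mul, Complex.norm_ofNat] at h3
      have : 0 ≤ ‖l z‖ := norm_nonneg _
      linarith
    exact (l.mkContinuous _ (LinearMap.bound_of_ball_bound' one_pos _ l hl)).continuous
  refine continuous_matrix fun i j => ?_
  obtain ⟨b, hb⟩ := hsurj (Matrix.single j i 1)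
  convert hcont b using 2 with a
  rw [hb, Matrix.trace]
  simp [mul_single_one_apply]

theorem hasDerivAt_expConj (x a : A) (t : ℂ) :
    HasDerivAt (expConj x a) (x * expConj x a t - expConj x a t * x) t := by
  have h1 := hasDerivAt_exp_smul_const' (𝕂 := ℂ) x t
  have h2 := hasDerivAt_exp_smul_const (𝕂 := ℂ) (-x) t
  have h := (h1.mul_const a).mul h2
  refine h.congr_deriv ?_
  unfold expConj
  noncomm_ring

theorem spectralRadius_expConj (x a : A) (t : ℂ) :
    spectralRadius ℂ (expConj x a t) = spectralRadius ℂ a := by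
  let _ : NormedAlgebra ℚ A := NormedAlgebra.restrictScalars ℚ ℂ A
  have h1 : NormedSpace.exp (t • x) * NormedSpace.exp (t • -x) = 1 := by
    rw [← NormedSpace.exp_add_of_commute (by simp)]
    simp
  have h2 : NormedSpace.exp (t • -x) * NormedSpace.exp (t • x) = 1 := by
    rw [← NormedSpace.exp_add_of_commute (by simp)]
    simp
  have := spectrum.units_conjugate (R := ℂ) (a := a)
    (u := ⟨NormedSpace.exp (t • x), NormedSpace.exp (t • -x), h1, h2⟩)
  unfold spectralRadius expConj
  exact congrArg (fun s : Set ℂ => ⨆ k ∈ s, (‖k‖₊ : ENNReal)) this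

/-- Liouville's theorem in differentiated form. -/
theorem eq_zero_of_hasDerivAt_of_bounded {g g' : ℂ → ℂ} (hg : ∀ t, HasDerivAt g (g' t) t)
    {C : ℝ} (hC : ∀ t, ‖g t‖ ≤ C) (t : ℂ) : g' t = 0 := by
  have hdiff : Differentiable ℂ g := fun t => (hg t).differentiableAt
  have hconst : g = fun _ => g 0 := funext fun t =>
    hdiff.apply_eq_apply_of_bounded
      (isBounded_iff_forall_norm_le.mpr ⟨C, by rintro _ ⟨s, rfl⟩; exact hC s⟩) t 0
  rw [hconst] at hg
  exact (hg t).unique (hasDerivAt_const t _)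

section Trace

attribute [local instance] Matrix.linftyOpNormedRing Matrix.linftyOpNormedAlgebra

theorem HasDerivAt.matrix_trace {M : ℂ → Matrix m m ℂ} {M' : Matrix m m ℂ} {t : ℂ}
    (h : HasDerivAt M M' t) : HasDerivAt (fun s => (M s).trace) M'.trace t :=
  (LinearMap.toContinuousLinearMap (Matrix.traceLinearMap m ℂ ℂ)).hasFDerivAt.comp_hasDerivAt t h

theorem hasDerivAt_map_expConj (hc : Continuous φ) (x a : A) (t : ℂ) :
    HasDerivAt (fun s => φ (expConj x a s))
      (φ (x * expConj x a t - expConj x a t * x)) t :=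
  (⟨φ, hc⟩ : A →L[ℂ] Matrix m m ℂ).hasFDerivAt.comp_hasDerivAt t (hasDerivAt_expConj x a t)

theorem trace_mul_map_commutator_eq_zero (hsurj : Function.Surjective φ)
    (hφ : ∀ a, spectralRadius ℂ (φ a) ≤ spectralRadius ℂ a) (x a : A) :
    (φ a * φ (x * a - a * x)).trace = 0 := by
  have hd := hasDerivAt_map_expConj (continuous_of_spectralRadius_le hsurj hφ) x a
  have h := eq_zero_of_hasDerivAt_of_bounded (fun t => ((hd t).mul (hd t)).matrix_trace)
    (C := Fintype.card m * (spectralRadius ℂ a).toReal ^ 2) (fun t => by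
      have := norm_trace_pow_map_le hφ (expConj x a t) two_pos
      rwa [spectralRadius_expConj, pow_two] at this) 0
  simp only [expConj_zero, Matrix.trace_add, Matrix.trace_mul_comm (φ (x * a - a * x))] at h
  linear_combination h / 2

theorem trace_sq_mul_map_commutator_eq_zero (hsurj : Function.Surjective φ)
    (hφ : ∀ a, spectralRadius ℂ (φ a) ≤ spectralRadius ℂ a) (x a : A) :
    (φ a * φ a * φ (x * a - a * x)).trace = 0 := by
  have hd := hasDerivAt_map_expConj (continuous_of_spectralRadius_le hsurj hφ) x a
  have h := eq_zero_of_hasDerivAt_of_bounded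
    (fun t => (((hd t).mul (hd t)).mul (hd t)).matrix_trace)
    (C := Fintype.card m * (spectralRadius ℂ a).toReal ^ 3) (fun t => by
      have := norm_trace_pow_map_le hφ (expConj x a t) three_pos
      rwa [spectralRadius_expConj, pow_three'] at this) 0
  simp only [Pi.mul_apply, expConj_zero, Matrix.trace_add, add_mul] at h
  have h1 : (φ (x * a - a * x) * φ a * φ a).trace = (φ a * φ a * φ (x * a - a * x)).trace := by
    rw [mul_assoc, Matrix.trace_mul_comm]
  have h2 : (φ a * φ (x * a - a * x) * φ a).trace = (φ a * φ a * φ (x * a - a * x)).trace := by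
    rw [Matrix.trace_mul_comm, ← mul_assoc]
  linear_combination (h - h1 - h2) / 3

end Trace

end Spectral

section Inner

variable {A : Type*} [NormedRing A] [NormedAlgebra ℂ A] [CompleteSpace A]
  {m : Type*} [Fintype m] [DecidableEq m] {φ : A →ₗ[ℂ] Matrix m m ℂ}

theorem map_commutator_eq_zero_of_map_eq_zero (hsurj : Function.Surjective φ)
    (hφ : ∀ a, spectralRadius ℂ (φ a) ≤ spectralRadius ℂ a) (x : A) {k : A} (hk : φ k = 0) :
    φ (x * k - k * x) = 0 := by
  rw [Matrix.ext_iff_trace_mul_left]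
  intro M
  obtain ⟨c, rfl⟩ := hsurj M
  have h := trace_mul_map_commutator_eq_zero hsurj hφ x (c + k)
  have h' := trace_mul_map_commutator_eq_zero hsurj hφ x c
  have e : x * (c + k) - (c + k) * x = (x * c - c * x) + (x * k - k * x) := by noncomm_ring
  rw [e, map_add φ c k, hk, add_zero, map_add, mul_add, Matrix.trace_add, h', zero_add] at h
  simpa using h

/-- Commutators with a fixed element are transported to inner derivations. -/
theorem exists_map_commutator_eq [Nonempty m] (hsurj : Function.Surjective φ) (h1 : φ 1 = 1)
    (hφ : ∀ a, spectralRadius ℂ (φ a) ≤ spectralRadius ℂ a) (x : A) :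
    ∃ h, ∀ a, φ (x * a - a * x) = h * φ a - φ a * h := by
  obtain ⟨s, hs⟩ := φ.exists_rightInverse_of_surjective (LinearMap.range_eq_top.mpr hsurj)
  have hs' : ∀ u, φ (s u) = u := fun u => LinearMap.congr_fun hs u
  let D : Matrix m m ℂ →ₗ[ℂ] Matrix m m ℂ :=
    φ.comp ((LinearMap.mulLeft ℂ x - LinearMap.mulRight ℂ x).comp s)
  have hD : ∀ a, D (φ a) = φ (x * a - a * x) := by
    intro a
    have hk : φ (s (φ a) - a) = 0 := by rw [map_sub, hs', sub_self]
    have := map_commutator_eq_zero_of_map_eq_zero hsurj hφ x hk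
    change φ (x * s (φ a) - s (φ a) * x) = _
    rw [← sub_eq_zero, ← map_sub, ← this]
    congr 1
    noncomm_ring
  obtain ⟨h, hh⟩ := exists_commutator_of_trace_eq_zero (D := D)
    (by rw [← h1, hD]; simp)
    (fun u => by
      obtain ⟨a, rfl⟩ := hsurj u
      rw [hD]
      exact trace_mul_map_commutator_eq_zero hsurj hφ x a)
    (fun u => by
      obtain ⟨a, rfl⟩ := hsurj u
      rw [hD]
      exact trace_sq_mul_map_commutator_eq_zero hsurj hφ x a)
  exact ⟨h, fun a => by rw [← hD, hh]⟩

end Inner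

section LieIdeal

variable {A : Type*} [NormedRing A] [NormedAlgebra ℂ A] [CompleteSpace A]

theorem isUnit_sub_one_of_spectralRadius_eq_zero {A : Type*} [Ring A] [Algebra ℂ A] {a : A}
    (h : spectralRadius ℂ a = 0) :
    IsUnit (a - 1) := by
  have h1 : (1 : ℂ) ∉ spectrum ℂ a := fun h1 => by
    have : (‖(1 : ℂ)‖₊ : ENNReal) ≤ spectralRadius ℂ a := le_iSup₂ (α := ENNReal) 1 h1
    simp [h] at this
  rw [spectrum.notMem_iff, map_one] at h1
  simpa using h1.neg

theorem exists_isUnit_pow_mul_pow_sub_one {a : A} (h : spectralRadius ℂ a = 0) (y : A) :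
    ∃ k, IsUnit (y ^ k * a ^ k - 1) := by
  have ht := spectrum.pow_nnnorm_pow_one_div_tendsto_nhds_spectralRadius a
  rw [h] at ht
  have hε : (0 : ENNReal) < ((2 * (‖y‖₊ + 1))⁻¹ : NNReal) := by
    rw [ENNReal.coe_pos]
    positivity
  obtain ⟨k, hk, hk1⟩ := ((ht.eventually (gt_mem_nhds hε)).and
    (Filter.eventually_ge_atTop 1)).exists
  refine ⟨k, ?_⟩
  have hk0 : 0 < k := hk1
  have hkR : (0 : ℝ) < k := by exact_mod_cast hk0
  rw [one_div, ENNReal.rpow_inv_lt_iff hkR, ENNReal.rpow_natCast] at hk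
  have hk' : ‖a ^ k‖₊ < (2 * (‖y‖₊ + 1))⁻¹ ^ k := by exact_mod_cast hk
  have hlt : ‖y ^ k * a ^ k‖₊ < 1 := by
    calc ‖y ^ k * a ^ k‖₊ ≤ ‖y ^ k‖₊ * ‖a ^ k‖₊ := nnnorm_mul_le _ _
      _ ≤ (‖y‖₊ + 1) ^ k * (2 * (‖y‖₊ + 1))⁻¹ ^ k := by
        gcongr
        exact (nnnorm_pow_le' y hk0).trans (by gcongr; exact le_self_add)
      _ = 2⁻¹ ^ k := by
        rw [← mul_pow, mul_inv, mul_comm (2⁻¹ : NNReal), mul_inv_cancel_left₀ (by positivity)]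
      _ < 1 := pow_lt_one₀ (by positivity) (by
        rw [inv_lt_one₀ (by positivity)]; exact one_lt_two) hk0.ne'
  have hu : IsUnit (1 - y ^ k * a ^ k) := isUnit_one_sub_of_norm_lt_one (by exact_mod_cast hlt)
  simpa using hu.neg

/-- A Lie ideal consisting of quasinilpotent elements lies in the Jacobson radical. -/
theorem mem_jacobson_of_quasinilpotent_lie_ideal {N : Set A}
    (hlie : ∀ x, ∀ a ∈ N, x * a - a * x ∈ N) (hN : ∀ a ∈ N, spectralRadius ℂ a = 0)
    {a : A} (ha : a ∈ N) : a ∈ (⊥ : Ideal A).jacobson := by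
  rw [Ideal.jacobson, Submodule.mem_sInf]
  rintro M ⟨-, hM⟩
  have hproper : ∀ u ∈ M, ¬ IsUnit u :=
    fun u hu hu' => hM.ne_top (Ideal.eq_top_of_isUnit_mem _ hu hu')
  have hmul : ∀ L : Ideal A, ¬ Submodule.map (LinearMap.toSpanSingleton A A a) L ≤ M →
      ∃ y ∈ L, y * a - 1 ∈ M := by
    intro L hL
    have htop : M ⊔ Submodule.map (LinearMap.toSpanSingleton A A a) L = ⊤ :=
      hM.1.2 _ (lt_of_le_of_ne le_sup_left fun h => hL (h ▸ le_sup_right))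
    have h1 : (1 : A) ∈ M ⊔ Submodule.map (LinearMap.toSpanSingleton A A a) L :=
      htop ▸ Submodule.mem_top
    obtain ⟨w, hw, v, ⟨y, hy, rfl⟩, hwv⟩ := Submodule.mem_sup.mp h1
    refine ⟨y, hy, ?_⟩
    rw [LinearMap.toSpanSingleton_apply, smul_eq_mul] at hwv
    rw [← hwv]
    simpa using hw
  have hMa : ∀ w ∈ M, w * a ∈ M := by
    by_contra hne
    obtain ⟨y, hy, hya⟩ := hmul M fun hle => hne fun w hw => hle ⟨w, hw, rfl⟩
    refine hproper _ ?_ (isUnit_sub_one_of_spectralRadius_eq_zero (hN _ (hlie y a ha)))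
    have : y * a - a * y - 1 = (y * a - 1) - a * y := by abel
    rw [this]
    exact M.sub_mem hya (Ideal.mul_mem_left M _ hy)
  by_contra haM
  obtain ⟨y, -, hya⟩ := hmul ⊤ fun hle => haM (hle ⟨1, trivial, one_mul a⟩)
  have hMpow : ∀ k, ∀ w ∈ M, w * a ^ k ∈ M := by
    intro k
    induction k with
    | zero => simp
    | succ k ih =>
      intro w hw
      rw [pow_succ, ← mul_assoc]
      exact hMa _ (ih w hw)
  have hpow : ∀ k, y ^ k * a ^ k - 1 ∈ M := by
    intro k
    induction k with
    | zero => simp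
    | succ k ih =>
      have : y ^ (k + 1) * a ^ (k + 1) - 1 =
          y ^ k * ((y * a - 1) * a ^ k) + (y ^ k * a ^ k - 1) := by
        rw [pow_succ, pow_succ' a]
        noncomm_ring
      rw [this]
      exact M.add_mem (Ideal.mul_mem_left M _ (hMpow k _ hya)) ih
  obtain ⟨k, hk⟩ := exists_isUnit_pow_mul_pow_sub_one (hN a ha) y
  exact hproper _ (hpow k) hk

end LieIdeal

section Central

variable {m : Type*} [Fintype m] [DecidableEq m]

theorem commute_of_trace_commutator_sq_eq_zero {q : Matrix m m ℂ}
    (h : ∀ y : Matrix m m ℂ, ((y * q - q * y) * (y * q - q * y)).trace = 0) (y : Matrix m m ℂ) :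
    y * q = q * y := by
  have hpol : ∀ y z : Matrix m m ℂ, ((y * q - q * y) * (z * q - q * z)).trace = 0 := by
    intro y z
    have e : (y + z) * q - q * (y + z) = (y * q - q * y) + (z * q - q * z) := by noncomm_ring
    have h1 := h (y + z)
    rw [e, add_mul, mul_add, mul_add, Matrix.trace_add, Matrix.trace_add, Matrix.trace_add, h y,
      h z, Matrix.trace_mul_comm (z * q - q * z)] at h1
    linear_combination h1 / 2
  have hδδ : ∀ y : Matrix m m ℂ, q * (y * q - q * y) - (y * q - q * y) * q = 0 := by
    intro y
    rw [Matrix.ext_iff_trace_mul_left]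
    intro z
    rw [mul_zero, Matrix.trace_zero, ← hpol y z, mul_sub z, mul_sub (y * q - q * y),
      Matrix.trace_sub, Matrix.trace_sub]
    congr 1
    · rw [Matrix.trace_mul_comm (y * q - q * y), mul_assoc]
    · rw [Matrix.trace_mul_comm z, mul_assoc]
  have hmul : ∀ y z : Matrix m m ℂ, (y * q - q * y) * (z * q - q * z) = 0 := by
    intro y z
    have h1 := hδδ (y * z)
    have h2 := hδδ y
    have h3 := hδδ z
    have e : q * (y * z * q - q * (y * z)) - (y * z * q - q * (y * z)) * q =
        (q * (y * q - q * y) - (y * q - q * y) * q) * z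
        + y * (q * (z * q - q * z) - (z * q - q * z) * q)
        - (2 : ℂ) • ((y * q - q * y) * (z * q - q * z)) := by
      rw [two_smul]
      noncomm_ring
    rw [h1, h2, h3, zero_mul, mul_zero, add_zero, zero_sub, zero_eq_neg] at e
    exact (smul_eq_zero.mp e).resolve_left two_ne_zero
  have hmul' : ∀ z : Matrix m m ℂ, (y * q - q * y) * z * (y * q - q * y) = 0 := by
    intro z
    have e : (y * q - q * y) * z * (y * q - q * y) =
        (y * z * q - q * (y * z)) * (y * q - q * y)
        - y * ((z * q - q * z) * (y * q - q * y)) := by noncomm_ring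
    rw [e, hmul, hmul, mul_zero, sub_zero]
  exact sub_eq_zero.mp (or_self_iff.mp (Matrix.eq_zero_or_eq_zero_of_mul_mul_eq_zero hmul'))

theorem AlgHom.spectralRadius_apply_le {A B : Type*} [Ring A] [Ring B] [Algebra ℂ A]
    [Algebra ℂ B] (f : A →ₐ[ℂ] B) (a : A) : spectralRadius ℂ (f a) ≤ spectralRadius ℂ a :=
  biSup_mono fun _ hz => AlgHom.spectrum_apply_subset f a hz

variable {B : Type*} [NormedRing B] [NormedAlgebra ℂ B] [CompleteSpace B]

attribute [local instance] Matrix.linftyOpNormedRing Matrix.linftyOpNormedAlgebra in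
/-- An element at which the spectral radius is subadditive is central modulo the kernel of every
finite-dimensional irreducible representation. -/
theorem commute_of_spectralRadius_add_le {f : B →ₐ[ℂ] Matrix m m ℂ}
    (hf : Function.Surjective f) {t : B}
    (ht : ∀ b, spectralRadius ℂ (t + b) ≤ spectralRadius ℂ t + spectralRadius ℂ b)
    (y : Matrix m m ℂ) : y * f t = f t * y := by
  refine commute_of_trace_commutator_sq_eq_zero (fun y => ?_) y
  obtain ⟨y, rfl⟩ := hf y
  have hle : ∀ b, spectralRadius ℂ (f.toLinearMap b) ≤ spectralRadius ℂ b :=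
    f.spectralRadius_apply_le
  have hd : ∀ s, HasDerivAt (fun s => f (expConj y t s))
      (f y * f (expConj y t s) - f (expConj y t s) * f y) s := fun s =>
    (hasDerivAt_map_expConj (continuous_of_spectralRadius_le (φ := f.toLinearMap) hf hle) y t
      s).congr_deriv (by simp)
  have hd1 := fun s => ((hd s).mul_const (f t)).matrix_trace
  set r := spectralRadius ℂ t with hr
  set r' := spectralRadius ℂ (-t)
  have hrtop : r ≠ ⊤ := spectralRadius_ne_top t
  have hr'top : r' ≠ ⊤ := spectralRadius_ne_top (-t)
  have hzero := eq_zero_of_hasDerivAt_of_bounded hd1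
    (C := Fintype.card m * (r.toReal ^ 2 + r.toReal ^ 2 + (r + r').toReal ^ 2)) (fun s => by
      have h1 := norm_trace_pow_map_le hle (expConj y t s) two_pos
      have h2 := norm_trace_pow_map_le hle t two_pos
      have h3 : ‖(f.toLinearMap (t + expConj y (-t) s) ^ 2).trace‖ ≤
          Fintype.card m * (r + r').toReal ^ 2 := by
        refine (norm_trace_pow_map_le hle _ two_pos).trans ?_
        gcongr
        · exact ENNReal.add_ne_top.mpr ⟨hrtop, hr'top⟩
        · exact (ht _).trans (by rw [spectralRadius_expConj])
      rw [spectralRadius_expConj] at h1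
      have hneg : expConj y (-t) s = - expConj y t s := by simp [expConj]
      have e : (2 : ℂ) * (f (expConj y t s) * f t).trace =
          (f.toLinearMap (expConj y t s) ^ 2).trace + (f.toLinearMap t ^ 2).trace
          - (f.toLinearMap (t + expConj y (-t) s) ^ 2).trace := by
        simp only [hneg, pow_two, AlgHom.toLinearMap_apply, map_add, map_neg, add_mul, mul_add,
          Matrix.trace_add, neg_mul, mul_neg, Matrix.trace_neg,
          Matrix.trace_mul_comm (f t) (f (expConj y t s))]
        ring
      have h4 : ‖(2 : ℂ) * (f (expConj y t s) * f t).trace‖ ≤ _ :=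
        e ▸ (norm_sub_le _ _).trans (add_le_add_left (norm_add_le _ _) _)
      rw [norm_mul, Complex.norm_ofNat] at h4
      have : 0 ≤ ‖(f (expConj y t s) * f t).trace‖ := norm_nonneg _
      linarith)
  have hd2 := ((((hd 0).const_mul (f y)).sub ((hd 0).mul_const (f y))).mul_const
    (f t)).matrix_trace
  have h0 := hd2.unique ((hasDerivAt_const 0 (0 : ℂ)).congr_of_eventuallyEq
    (Filter.Eventually.of_forall hzero))
  rw [expConj_zero] at h0
  set Y := f y
  set q := f t
  have e : ((Y * (Y * q - q * Y) - (Y * q - q * Y) * Y) * q).trace =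
      - ((Y * q - q * Y) * (Y * q - q * Y)).trace := by
    have e1 : (Y * (Y * q - q * Y) * q).trace = ((Y * q - q * Y) * (q * Y)).trace := by
      rw [mul_assoc, Matrix.trace_mul_comm, mul_assoc]
    rw [sub_mul, Matrix.trace_sub, e1, mul_assoc, mul_sub (Y * q - q * Y), Matrix.trace_sub]
    ring
  rw [e] at h0
  exact neg_eq_zero.mp h0

end Central

section Gelfand

universe u

variable {A : Type u} [NormedRing A] [NormedAlgebra ℂ A] [CompleteSpace A]

theorem Subalgebra.spectralRadius_coe_of_isClosed {C : Subalgebra ℂ A}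
    (hC : IsClosed (C : Set A)) (c : C) : spectralRadius ℂ c = spectralRadius ℂ (c : A) := by
  have : CompleteSpace C := hC.completeSpace_coe
  exact tendsto_nhds_unique
    (spectrum.pow_nnnorm_pow_one_div_tendsto_nhds_spectralRadius c)
    (spectrum.pow_nnnorm_pow_one_div_tendsto_nhds_spectralRadius (c : A))

/-- Gelfand representation of a closed commutative subalgebra. -/
theorem Subalgebra.exists_gelfand {C : Subalgebra ℂ A} (hC : IsClosed (C : Set A))
    (hcomm : ∀ x ∈ C, ∀ y ∈ C, x * y = y * x) :
    ∃ (X : Type u) (_ : TopologicalSpace X) (_ : CompactSpace X) (G : C →ₐ[ℂ] C(X, ℂ)),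
      ∀ c, (‖G c‖₊ : ENNReal) = spectralRadius ℂ (c : A) := by
  have : CompleteSpace C := hC.completeSpace_coe
  let _ : NormedCommRing C :=
    { (inferInstance : NormedRing C) with
      mul_comm := fun x y => Subtype.ext (hcomm x x.2 y y.2) }
  refine ⟨WeakDual.characterSpace ℂ C, inferInstance, inferInstance,
    WeakDual.gelfandTransform ℂ C, fun c => ?_⟩
  refine (IsStarNormal.spectralRadius_eq_nnnorm (A := C(WeakDual.characterSpace ℂ C, ℂ))
    (WeakDual.gelfandTransform ℂ C c)).symm.trans ?_
  rw [← spectralRadius_coe_of_isClosed hC]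
  unfold spectralRadius
  rw [spectrum.gelfandTransform_eq]

theorem isClosed_doubleCentralizer {A : Type*} [NormedRing A] [NormedAlgebra ℂ A] (s : Set A) :
    IsClosed (Subalgebra.centralizer ℂ (Subalgebra.centralizer ℂ s : Set A) : Set A) := by
  rw [Subalgebra.coe_centralizer]
  exact Set.isClosed_centralizer _

theorem mem_doubleCentralizer {R : Type*} [Ring R] [Algebra ℂ R] {s : Set R} {x : R}
    (hx : x ∈ s) : x ∈ Subalgebra.centralizer ℂ (Subalgebra.centralizer ℂ s : Set R) :=
  fun _ hg => (hg x hx).symm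

theorem commute_of_mem_doubleCentralizer {R : Type*} [Ring R] [Algebra ℂ R] {s : Set R}
    (hs : ∀ x ∈ s, ∀ y ∈ s, x * y = y * x) :
    ∀ x ∈ Subalgebra.centralizer ℂ (Subalgebra.centralizer ℂ s : Set R),
      ∀ y ∈ Subalgebra.centralizer ℂ (Subalgebra.centralizer ℂ s : Set R), x * y = y * x :=
  fun x hx _ hy => hy x fun g hg => hx g fun k hk => hs k hk g hg

theorem spectralRadius_add_le_of_commute {a b : A} (h : a * b = b * a) :
    spectralRadius ℂ (a + b) ≤ spectralRadius ℂ a + spectralRadius ℂ b := by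
  obtain ⟨X, _, _, G, hG⟩ := Subalgebra.exists_gelfand (isClosed_doubleCentralizer {a, b})
    (commute_of_mem_doubleCentralizer (by
      rintro x (rfl | rfl) y (rfl | rfl) <;> simp [h]))
  have ha := mem_doubleCentralizer (s := {a, b}) (x := a) (by simp)
  have hb := mem_doubleCentralizer (s := {a, b}) (x := b) (by simp)
  have h1 := hG (⟨a, ha⟩ + ⟨b, hb⟩)
  have h2 := hG ⟨a, ha⟩
  have h3 := hG ⟨b, hb⟩
  rw [map_add] at h1
  change _ = spectralRadius ℂ (a + b) at h1
  rw [← h1, ← h2, ← h3]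
  exact_mod_cast nnnorm_add_le _ _

end Gelfand

section States

variable {X : Type*} [TopologicalSpace X] [CompactSpace X]

theorem norm_mul_add_norm_one_sub_mul_le {F : C(X, ℂ) →L[ℂ] ℂ} (hF : ‖F‖ ≤ 1) {g : C(X, ℂ)}
    (hg : ∀ x, ∃ r ∈ Set.Icc (0 : ℝ) 1, g x = r) {h k : C(X, ℂ)} (hh : ‖h‖ ≤ 1) (hk : ‖k‖ ≤ 1) :
    ‖F (g * h)‖ + ‖F ((1 - g) * k)‖ ≤ 1 := by
  obtain ⟨u, hu, hu'⟩ := Complex.exists_norm_eq_mul_self (F (g * h))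
  obtain ⟨v, hv, hv'⟩ := Complex.exists_norm_eq_mul_self (F ((1 - g) * k))
  have e : ((‖F (g * h)‖ + ‖F ((1 - g) * k)‖ : ℝ) : ℂ) =
      F (u • (g * h) + v • ((1 - g) * k)) := by
    rw [map_add, map_smul, map_smul, smul_eq_mul, smul_eq_mul, ← hu', ← hv']
    push_cast
    rfl
  have hle : ‖u • (g * h) + v • ((1 - g) * k)‖ ≤ 1 := by
    rw [ContinuousMap.norm_le _ zero_le_one]
    intro x
    obtain ⟨r, ⟨hr0, hr1⟩, hr⟩ := hg x
    have h1 : ‖h x‖ ≤ 1 := (h.norm_coe_le_norm x).trans hh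
    have h2 : ‖k x‖ ≤ 1 := (k.norm_coe_le_norm x).trans hk
    have e1 : ‖u * ((r : ℂ) * h x)‖ = r * ‖h x‖ := by
      rw [norm_mul, norm_mul, hu, one_mul, Complex.norm_of_nonneg hr0]
    have e2 : ‖v * ((1 - (r : ℂ)) * k x)‖ = (1 - r) * ‖k x‖ := by
      rw [norm_mul, norm_mul, hv, one_mul, ← Complex.ofReal_one, ← Complex.ofReal_sub,
        Complex.norm_of_nonneg (sub_nonneg.mpr hr1)]
    simp only [ContinuousMap.add_apply, ContinuousMap.smul_apply, ContinuousMap.mul_apply,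
      ContinuousMap.sub_apply, ContinuousMap.one_apply, smul_eq_mul, hr]
    refine (norm_add_le _ _).trans ?_
    rw [e1, e2]
    nlinarith [norm_nonneg (h x), norm_nonneg (k x)]
  have h3 := F.le_of_opNorm_le_of_le hF hle
  rw [← e, Complex.norm_of_nonneg (by positivity)] at h3
  simpa using h3

open scoped ComplexOrder in
theorem exists_map_eq_ofReal_and_norm_mul_le {F : C(X, ℂ) →L[ℂ] ℂ} (hF : ‖F‖ ≤ 1) (hF1 : F 1 = 1)
    {g : C(X, ℂ)} (hg : ∀ x, ∃ r ∈ Set.Icc (0 : ℝ) 1, g x = r) :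
    ∃ r : ℝ, 0 ≤ r ∧ F g = r ∧ ∀ h, ‖F (g * h)‖ ≤ r * ‖h‖ := by
  have h1 : ‖(1 : C(X, ℂ))‖ ≤ 1 := (ContinuousMap.norm_le _ zero_le_one).mpr fun x => by simp
  have hsum : F g + F (1 - g) = 1 := by rw [map_sub, hF1]; ring
  have hle := norm_mul_add_norm_one_sub_mul_le hF hg h1 h1
  rw [mul_one, mul_one] at hle
  have hre : (F g).re + (F (1 - g)).re = 1 := by rw [← Complex.add_re, hsum, Complex.one_re]
  have hr1 := Complex.re_le_norm (F g)
  have hr2 := Complex.re_le_norm (F (1 - g))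
  have hpos : 0 ≤ F g := Complex.re_eq_norm.mp (by linarith)
  refine ⟨‖F g‖, norm_nonneg _, (Complex.eq_coe_norm_of_nonneg hpos), fun h => ?_⟩
  have hball : ∀ h : C(X, ℂ), ‖h‖ ≤ 1 → ‖F (g * h)‖ ≤ ‖F g‖ := by
    intro h hh
    have := norm_mul_add_norm_one_sub_mul_le hF hg hh h1
    rw [mul_one] at this
    linarith
  rcases eq_or_ne h 0 with rfl | hne
  · simp
  · have hn : 0 < ‖h‖ := norm_pos_iff.mpr hne
    have h2 := hball ((‖h‖⁻¹ : ℂ) • h) (by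
      rw [norm_smul, norm_inv, Complex.norm_real, norm_norm, inv_mul_cancel₀ hn.ne'])
    rw [mul_smul_comm, map_smul, norm_smul, norm_inv, Complex.norm_real, norm_norm,
      inv_mul_le_iff₀ hn] at h2
    linarith

variable {C : Type*} [Ring C] [Algebra ℂ C]

/-- The unital linear functionals dominated by the seminorm induced by `G`. -/
def stateSet (G : C →ₐ[ℂ] C(X, ℂ)) : Set (C → ℂ) :=
  {f | (∀ x y, f (x + y) = f x + f y) ∧ (∀ (z : ℂ) x, f (z • x) = z * f x) ∧ f 1 = 1 ∧
    ∀ x, ‖f x‖ ≤ ‖G x‖}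

theorem convex_stateSet (G : C →ₐ[ℂ] C(X, ℂ)) : Convex ℝ (stateSet G) := by
  rintro f ⟨f1, f2, f3, f4⟩ g ⟨g1, g2, g3, g4⟩ a b ha hb hab
  refine ⟨fun x y => ?_, fun z x => ?_, ?_, fun x => ?_⟩
  · simp only [Pi.add_apply, Pi.smul_apply, f1, g1, smul_add]
    abel
  · simp only [Pi.add_apply, Pi.smul_apply, f2, g2, Complex.real_smul]
    ring
  · simp only [Pi.add_apply, Pi.smul_apply, f3, g3, Complex.real_smul, mul_one]
    exact_mod_cast hab
  · simp only [Pi.add_apply, Pi.smul_apply]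
    refine (norm_add_le _ _).trans ?_
    rw [norm_smul, norm_smul, Real.norm_of_nonneg ha, Real.norm_of_nonneg hb]
    calc a * ‖f x‖ + b * ‖g x‖ ≤ a * ‖G x‖ + b * ‖G x‖ := by gcongr <;> apply_assumption
      _ = ‖G x‖ := by rw [← add_mul, hab, one_mul]

theorem isCompact_stateSet (G : C →ₐ[ℂ] C(X, ℂ)) : IsCompact (stateSet G) := by
  refine (isCompact_univ_pi fun x => isCompact_closedBall (0 : ℂ) ‖G x‖).of_isClosed_subset ?_
    fun f hf x _ => mem_closedBall_zero_iff.mpr (hf.2.2.2 x)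
  unfold stateSet
  simp only [Set.ofPred_and, Set.ofPred_forall]
  refine .inter (isClosed_iInter fun x => isClosed_iInter fun y => isClosed_eq ?_ ?_)
    (.inter (isClosed_iInter fun z => isClosed_iInter fun x => isClosed_eq ?_ ?_)
      (.inter (isClosed_eq ?_ ?_) (isClosed_iInter fun x => isClosed_le ?_ ?_))) <;> fun_prop

/-- Hahn–Banach extension of a state. -/
theorem exists_extension_of_mem_stateSet {G : C →ₐ[ℂ] C(X, ℂ)} {f : C → ℂ}
    (hf : f ∈ stateSet G) : ∃ F : C(X, ℂ) →L[ℂ] ℂ, ‖F‖ ≤ 1 ∧ ∀ c, F (G c) = f c := by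
  obtain ⟨f1, f2, f3, f4⟩ := hf
  let fl : C →ₗ[ℂ] ℂ := { toFun := f, map_add' := f1, map_smul' := f2 }
  let R := G.toLinearMap.rangeRestrict
  obtain ⟨s, hs⟩ := R.exists_rightInverse_of_surjective (LinearMap.range_rangeRestrict _)
  have hs' : ∀ r, G (s r) = r := fun r => congrArg Subtype.val (LinearMap.congr_fun hs r)
  obtain ⟨F, hF, hFn⟩ := exists_extension_norm_eq _ ((fl.comp s).mkContinuous 1 fun r => by
    rw [one_mul]
    exact (f4 (s r)).trans_eq (by rw [hs']; rfl))
  refine ⟨F, hFn.trans_le (LinearMap.mkContinuous_norm_le _ zero_le_one _), fun c => ?_⟩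
  refine (hF (R c)).trans ?_
  change fl (s (R c)) = fl c
  rw [← sub_eq_zero, ← map_sub, ← norm_le_zero_iff]
  refine (f4 _).trans_eq ?_
  rw [map_sub, hs', norm_eq_zero]
  exact sub_self _

theorem map_mul_of_mem_extremePoints_of_mem_Icc {G : C →ₐ[ℂ] C(X, ℂ)} {f : C → ℂ}
    (hf : f ∈ (stateSet G).extremePoints ℝ) {F : C(X, ℂ) →L[ℂ] ℂ} (hF : ‖F‖ ≤ 1)
    (hFf : ∀ c, F (G c) = f c) {g : C(X, ℂ)} (hg : ∀ x, ∃ r ∈ Set.Icc (0 : ℝ) 1, g x = r) (c : C) :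
    F (g * G c) = F g * f c := by
  have hF1 : F 1 = 1 := by rw [← map_one G, hFf, hf.1.2.2.1]
  have hstate : ∀ (p : C(X, ℂ)) (r : ℝ), 0 < r → F p = r → (∀ h, ‖F (p * h)‖ ≤ r * ‖h‖) →
      (fun c => (r : ℂ)⁻¹ * F (p * G c)) ∈ stateSet G := by
    intro p r hr hp hb
    have hrC : (r : ℂ) ≠ 0 := by exact_mod_cast hr.ne'
    refine ⟨fun x y => ?_, fun z x => ?_, ?_, fun x => ?_⟩
    · simp only [map_add, mul_add]
    · simp only [map_smul, mul_smul_comm, smul_eq_mul]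
      ring
    · simp only [map_one, mul_one, hp]
      exact inv_mul_cancel₀ hrC
    · simp only [norm_mul, norm_inv, Complex.norm_of_nonneg hr.le]
      rw [inv_mul_le_iff₀ hr]
      exact hb _
  have hg' : ∀ x, ∃ r ∈ Set.Icc (0 : ℝ) 1, (1 - g) x = r := by
    intro x
    obtain ⟨r, ⟨h0, h1⟩, hr⟩ := hg x
    exact ⟨1 - r, ⟨by linarith, by linarith⟩, by simp [hr]⟩
  obtain ⟨a, ha0, ha, hab⟩ := exists_map_eq_ofReal_and_norm_mul_le hF hF1 hg
  obtain ⟨b, hb0, hb, hbb⟩ := exists_map_eq_ofReal_and_norm_mul_le hF hF1 hg'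
  have hsum : a + b = 1 := by
    have : (a : ℂ) + b = 1 := by rw [← ha, ← hb, map_sub, hF1]; ring
    exact_mod_cast this
  have hsplit : ∀ c, F (g * G c) + F ((1 - g) * G c) = f c := by
    intro c
    rw [← map_add, ← add_mul, add_sub_cancel, one_mul, hFf]
  rcases ha0.eq_or_lt with rfl | ha0
  · have := hab (G c)
    rw [zero_mul, norm_le_zero_iff] at this
    rw [this, ha, Complex.ofReal_zero, zero_mul]
  rcases hb0.eq_or_lt with rfl | hb0
  · have := hbb (G c)
    rw [zero_mul, norm_le_zero_iff] at this
    have h1 := hsplit c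
    rw [this, add_zero] at h1
    rw [add_zero] at hsum
    rw [h1, ha, hsum, Complex.ofReal_one, one_mul]
  have haC : (a : ℂ) ≠ 0 := by exact_mod_cast ha0.ne'
  have hbC : (b : ℂ) ≠ 0 := by exact_mod_cast hb0.ne'
  have h1 := (mem_extremePoints.mp hf).2 _ (hstate g a ha0 ha hab) _
    (hstate (1 - g) b hb0 hb hbb) ⟨a, b, ha0, hb0, hsum, by
      funext c
      simp only [Pi.add_apply, Pi.smul_apply, Complex.real_smul]
      rw [mul_inv_cancel_left₀ haC, mul_inv_cancel_left₀ hbC, hsplit]⟩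
  have h2 := congrFun h1.1 c
  rw [← h2, ha, mul_inv_cancel_left₀ haC]

theorem map_mul_of_mem_extremePoints {G : C →ₐ[ℂ] C(X, ℂ)} {f : C → ℂ}
    (hf : f ∈ (stateSet G).extremePoints ℝ) (c d : C) : f (c * d) = f c * f d := by
  obtain ⟨F, hF, hFf⟩ := exists_extension_of_mem_stateSet hf.1
  have hI := fun g hg => map_mul_of_mem_extremePoints_of_mem_Icc hf hF hFf (g := g) hg d
  have hF1 : F 1 = 1 := by rw [← map_one G, hFf, hf.1.2.2.1]
  have h1 : F (1 * G d) = F 1 * f d := by rw [one_mul, hF1, one_mul, hFf]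
  set N : ℝ := ‖G c‖ + 1 with hN
  have hN0 : 0 < N := by positivity
  have hNC : (N : ℂ) ≠ 0 := by exact_mod_cast hN0.ne'
  have hreal : ∀ r : C(X, ℝ), (∀ x, |r x| ≤ N) →
      ∃ p : C(X, ℂ), (∀ x, p x = r x) ∧ F (p * G d) = F p * f d := by
    intro r hr
    let q : C(X, ℂ) := ⟨fun x => (((r x + N) / (2 * N) : ℝ) : ℂ), by fun_prop⟩
    have hq := hI q fun x => ⟨(r x + N) / (2 * N), ⟨by
      have := abs_le.mp (hr x)
      exact div_nonneg (by linarith) (by linarith), by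
      have := abs_le.mp (hr x)
      rw [div_le_one (by positivity)]
      linarith⟩, rfl⟩
    refine ⟨(2 * N : ℂ) • q - (N : ℂ) • 1, fun x => ?_, ?_⟩
    · change (2 * N : ℂ) * (((r x + N) / (2 * N) : ℝ) : ℂ) - N * 1 = r x
      push_cast
      field_simp
      ring
    · simp only [sub_mul, smul_mul_assoc, map_sub, map_smul, hq, h1, smul_eq_mul]
      ring
  have hb : ∀ x, ‖G c x‖ ≤ N := fun x => ((G c).norm_coe_le_norm x).trans (by linarith)
  obtain ⟨p, hp, hp'⟩ := hreal ⟨fun x => (G c x).re, by fun_prop⟩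
    fun x => (Complex.abs_re_le_norm _).trans (hb x)
  obtain ⟨q, hq, hq'⟩ := hreal ⟨fun x => (G c x).im, by fun_prop⟩
    fun x => (Complex.abs_im_le_norm _).trans (hb x)
  have e : G c = p + Complex.I • q := by
    ext x
    simp only [ContinuousMap.add_apply, ContinuousMap.smul_apply, hp, hq, smul_eq_mul]
    simpa [mul_comm] using (Complex.re_add_im (G c x)).symm
  rw [← hFf (c * d), ← hFf c, map_mul, e]
  simp only [add_mul, smul_mul_assoc, map_add, map_smul, hp', hq', smul_eq_mul]
  ring

/-- A unital linear bijection between algebras of functions that preserves the uniform norm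
preserves squares. -/
theorem map_mul_self_sub_eq_zero_of_norm_eq {X' : Type*} [TopologicalSpace X'] [CompactSpace X']
    {C' : Type*} [Ring C'] [Algebra ℂ C'] {G : C →ₐ[ℂ] C(X, ℂ)} {G' : C' →ₐ[ℂ] C(X', ℂ)}
    (T : C ≃ₗ[ℂ] C') (hT1 : T 1 = 1) (hT : ∀ c, ‖G' (T c)‖ = ‖G c‖) (c : C) :
    G' (T (c * c) - T c * T c) = 0 := by
  have himage : LinearEquiv.funCongrLeft ℝ ℂ T.toEquiv '' stateSet G' = stateSet G := by
    ext f
    constructor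
    · rintro ⟨f', ⟨h1, h2, h3, h4⟩, rfl⟩
      refine ⟨fun x y => ?_, fun z x => ?_, ?_, fun x => ?_⟩
      · change f' (T (x + y)) = f' (T x) + f' (T y)
        rw [map_add, h1]
      · change f' (T (z • x)) = z * f' (T x)
        rw [map_smul, h2]
      · change f' (T 1) = 1
        rw [hT1, h3]
      · exact (h4 (T x)).trans_eq (hT x)
    · rintro ⟨h1, h2, h3, h4⟩
      refine ⟨fun x => f (T.symm x), ⟨fun x y => ?_, fun z x => ?_, ?_, fun x => ?_⟩, ?_⟩
      · beta_reduce
        rw [map_add, h1]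
      · beta_reduce
        rw [map_smul, h2]
      · beta_reduce
        rw [← hT1, T.symm_apply_apply, h3]
      · refine (h4 _).trans_eq ?_
        rw [← hT, T.apply_symm_apply]
      · funext x
        exact congrArg f (T.symm_apply_apply x)
  have hext : ∀ f ∈ (stateSet G').extremePoints ℝ, f (T (c * c) - T c * T c) = 0 := by
    intro f hf
    have h1 := map_mul_of_mem_extremePoints hf (T c) (T c)
    have hf' : LinearEquiv.funCongrLeft ℝ ℂ T.toEquiv f ∈ (stateSet G).extremePoints ℝ := by
      rw [← himage, ← image_extremePoints]
      exact ⟨f, hf, rfl⟩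
    have h2 : f (T (c * c)) = f (T c) * f (T c) := map_mul_of_mem_extremePoints hf' c c
    have h3 := hf.1.1 (T (c * c) - T c * T c) (T c * T c)
    rw [sub_add_cancel, h1, h2] at h3
    simpa using h3
  have hall : ∀ f ∈ stateSet G', f (T (c * c) - T c * T c) = 0 := by
    intro f hf
    rw [← closure_convexHull_extremePoints (isCompact_stateSet G') (convex_stateSet G')] at hf
    refine closure_minimal (t := {f : C' → ℂ | f (T (c * c) - T c * T c) = 0})
      (convexHull_min hext ?_) (isClosed_eq (by fun_prop) continuous_const) hf
    intro f (hf : f _ = 0) g (hg : g _ = 0) a b _ _ _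
    change a • f _ + b • g _ = 0
    rw [hf, hg, smul_zero, smul_zero, add_zero]
  ext x
  exact hall (fun b => G' b x) ⟨fun _ _ => by simp, fun _ _ => by simp, by simp,
    fun b => (G' b).norm_coe_le_norm x⟩

end States

/-- A spectral isometry preserving the vanishing of commutators has nilpotent square defect in each
irreducible representation, and a perturbation argument shows that the defect vanishes. -/
theorem map_mul_self_of_representation {A B : Type*} [Ring A] [Algebra ℂ A] [Ring B] [Algebra ℂ B]
    {T : A →ₗ[ℂ] B} {m : Type*} [Fintype m] [DecidableEq m]
    {f : B →ₐ[ℂ] Matrix m m ℂ} (hf : Function.Surjective f) (hsurj : Function.Surjective T)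
    (hcomm : ∀ x y, x * y = y * x → T x * T y = T y * T x)
    (hq : ∀ a, spectralRadius ℂ (T (a * a) - T a * T a) = 0) (a : A) :
    f (T (a * a) - T a * T a) = 0 := by
  have hnil : ∀ a, f (T (a * a) - T a * T a) ^ Fintype.card m = 0 := by
    refine fun a => pow_card_eq_zero_of_spectrum_subset fun z hz => ?_
    have h := norm_le_toReal_of_mem_spectrum ENNReal.zero_ne_top
      ((f.spectralRadius_apply_le _).trans_eq (hq a)) hz
    simpa using h
  have hc : ∀ a, f (T (a * a) - T a * T a) * f (T a) = f (T a) * f (T (a * a) - T a * T a) := by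
    intro a
    rw [← map_mul f, ← map_mul f, sub_mul, mul_sub, hcomm (a * a) a (mul_assoc a a a), mul_assoc]
  let d : m → ℂ := fun k => (Fintype.equivFin m k : ℕ)
  have hd : Function.Injective d := fun k l h =>
    (Fintype.equivFin m).injective (Fin.ext (Nat.cast_injective h))
  obtain ⟨b, hb⟩ := hf (Matrix.diagonal d)
  obtain ⟨a₀, rfl⟩ := hsurj b
  have hexp : ∀ s : ℂ, f (T ((a₀ + s • a) * (a₀ + s • a)) - T (a₀ + s • a) * T (a₀ + s • a)) =
      f (T (a₀ * a₀) - T a₀ * T a₀) +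
      s • f (T (a₀ * a + a * a₀) - (T a₀ * T a + T a * T a₀)) +
      s ^ 2 • f (T (a * a) - T a * T a) := by
    intro s
    simp only [← map_smul, ← map_add]
    congr 1
    simp only [map_add, map_smul, add_mul, mul_add, smul_mul_assoc, mul_smul_comm]
    module
  have hlin : ∀ s : ℂ, f (T (a₀ + s • a)) = Matrix.diagonal d + s • f (T a) := by
    intro s
    rw [map_add, map_smul, map_add, map_smul, hb]
  refine eq_zero_of_quadratic_commute hd (e := f (T a)) (q₀ := f (T (a₀ * a₀) - T a₀ * T a₀))
    (q₁ := f (T (a₀ * a + a * a₀) - (T a₀ * T a + T a * T a₀))) (fun s => ?_) (fun s => ?_)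
    ⟨_, hnil a⟩
  · rw [← hexp, ← hlin, hc]
  · rw [← hexp, hnil]

section Main

variable {A B : Type*} [NormedRing A] [NormedAlgebra ℂ A] [CompleteSpace A]
  [NormedRing B] [NormedAlgebra ℂ B] {T : A →ₗ[ℂ] B}

theorem exists_map_commutator_eq_of_representation {m : Type*} [Fintype m] [DecidableEq m]
    [Nonempty m] {f : B →ₐ[ℂ] Matrix m m ℂ} (hf : Function.Surjective f)
    (hsurj : Function.Surjective T) (hT1 : T 1 = 1)
    (hρ : ∀ a, spectralRadius ℂ (T a) = spectralRadius ℂ a) (x : A) :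
    ∃ h, ∀ a, (f.toLinearMap ∘ₗ T) (x * a - a * x) =
      h * (f.toLinearMap ∘ₗ T) a - (f.toLinearMap ∘ₗ T) a * h :=
  exists_map_commutator_eq (φ := f.toLinearMap ∘ₗ T) (hf.comp hsurj) (by simp [hT1])
    (fun a => (f.spectralRadius_apply_le (T a)).trans_eq (hρ a)) x

variable {ι : Type*} {n : ι → Type*} [∀ i, Fintype (n i)] [∀ i, DecidableEq (n i)]
  [∀ i, Nonempty (n i)] {π : ∀ i, B →ₐ[ℂ] Matrix (n i) (n i) ℂ}

theorem injective_of_spectralRadius_eq (hA : (⊥ : Ideal A).jacobson = ⊥)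
    (hπ : ∀ i, Function.Surjective (π i)) (hsep : ∀ b, (∀ i, π i b = 0) → b = 0)
    (hsurj : Function.Surjective T) (hT1 : T 1 = 1)
    (hρ : ∀ a, spectralRadius ℂ (T a) = spectralRadius ℂ a) : Function.Injective T := by
  rw [injective_iff_map_eq_zero]
  intro a ha
  have h := mem_jacobson_of_quasinilpotent_lie_ideal (N := {a | T a = 0})
    (fun x a (ha : T a = 0) => hsep _ fun i => by
      obtain ⟨h, hh⟩ := exists_map_commutator_eq_of_representation (hπ i) hsurj hT1 hρ x
      have := hh a
      simpa [ha] using this)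
    (fun a (ha : T a = 0) => by rw [← hρ, ha, spectrum.spectralRadius_zero]) ha
  rwa [hA, Submodule.mem_bot] at h

variable [CompleteSpace B]

theorem spectralRadius_map_mul_self_sub_eq_zero (hinj : Function.Injective T)
    (hsurj : Function.Surjective T) (hT1 : T 1 = 1)
    (hρ : ∀ a, spectralRadius ℂ (T a) = spectralRadius ℂ a)
    (hcomm : ∀ x y, T x * T y = T y * T x ↔ x * y = y * x) (a : A) :
    spectralRadius ℂ (T (a * a) - T a * T a) = 0 := by
  let e : A ≃ₗ[ℂ] B := LinearEquiv.ofBijective T ⟨hinj, hsurj⟩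
  let C := Subalgebra.centralizer ℂ (Subalgebra.centralizer ℂ {a} : Set A)
  let C' := Subalgebra.centralizer ℂ (Subalgebra.centralizer ℂ {T a} : Set B)
  have hmem : ∀ x, T x ∈ C' ↔ x ∈ C := by
    intro x
    constructor
    · intro hx g hg
      refine (hcomm _ _).mp (hx (T g) fun k hk => ?_)
      rw [Set.mem_singleton_iff.mp hk]
      exact (hcomm _ _).mpr (hg a rfl)
    · intro hx g hg
      obtain ⟨g, rfl⟩ := hsurj g
      refine (hcomm _ _).mpr (hx g fun k hk => ?_)
      rw [Set.mem_singleton_iff.mp hk]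
      exact (hcomm _ _).mp (hg (T a) rfl)
  let S : C ≃ₗ[ℂ] C' :=
    { toFun := fun c => ⟨T c, (hmem c).mpr c.2⟩
      map_add' := fun x y => Subtype.ext (map_add T _ _)
      map_smul' := fun z x => Subtype.ext (map_smul T _ _)
      invFun := fun c => ⟨e.symm c, (hmem _).mp (by
        change e (e.symm c) ∈ C'
        rw [e.apply_symm_apply]
        exact c.2)⟩
      left_inv := fun c => Subtype.ext (e.symm_apply_apply c)
      right_inv := fun c => Subtype.ext (e.apply_symm_apply c) }
  obtain ⟨X, _, _, G, hG⟩ := Subalgebra.exists_gelfand (isClosed_doubleCentralizer {a})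
    (commute_of_mem_doubleCentralizer (by rintro x rfl y rfl; rfl))
  obtain ⟨X', _, _, G', hG'⟩ := Subalgebra.exists_gelfand (isClosed_doubleCentralizer {T a})
    (commute_of_mem_doubleCentralizer (by rintro x rfl y rfl; rfl))
  have hnorm : ∀ c, ‖G' (S c)‖ = ‖G c‖ := by
    intro c
    have h := (hG' (S c)).trans ((hρ c).trans (hG c).symm)
    exact congrArg NNReal.toReal (ENNReal.coe_injective h)
  have h := map_mul_self_sub_eq_zero_of_norm_eq S (Subtype.ext hT1) hnorm
    ⟨a, mem_doubleCentralizer rfl⟩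
  have h2 := hG' (S (⟨a, mem_doubleCentralizer rfl⟩ * ⟨a, mem_doubleCentralizer rfl⟩) -
    S ⟨a, mem_doubleCentralizer rfl⟩ * S ⟨a, mem_doubleCentralizer rfl⟩)
  rw [h, nnnorm_zero, ENNReal.coe_zero] at h2
  exact h2.symm

theorem map_commute_iff_of_spectralRadius_eq (hinj : Function.Injective T)
    (hπ : ∀ i, Function.Surjective (π i)) (hsep : ∀ b, (∀ i, π i b = 0) → b = 0)
    (hsurj : Function.Surjective T) (hT1 : T 1 = 1)
    (hρ : ∀ a, spectralRadius ℂ (T a) = spectralRadius ℂ a) (x y : A) :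
    T x * T y = T y * T x ↔ x * y = y * x := by
  have hin := fun i => exists_map_commutator_eq_of_representation (hπ i) hsurj hT1 hρ
  have hφ : ∀ i, Function.Surjective ((π i).toLinearMap ∘ₗ T) := fun i => (hπ i).comp hsurj
  let good : Set ι := {i | ∀ x y, π i (T (x * y - y * x)) = 0 →
    π i (T x) * π i (T y) = π i (T y) * π i (T x)}
  have hbad : ∀ i ∉ good, ∀ x y, π i (T (x * y - y * x)) = 0 := fun i hi =>
    (bracket_dichotomy (hφ i) (hin i)).resolve_right hi
  have hback : ∀ x y, (∀ i ∈ good, π i (T x) * π i (T y) = π i (T y) * π i (T x)) →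
      x * y = y * x := by
    intro x y h
    rw [← sub_eq_zero]
    refine hinj ?_
    rw [map_zero]
    refine hsep _ fun i => ?_
    by_cases hi : i ∈ good
    · exact bracket_eq_zero_of_commute (hφ i) (hin i) (h i hi)
    · exact hbad i hi x y
  have hcentral : ∀ b, (∀ i ∈ good, π i b = 0) → ∀ i z, z * π i b = π i b * z := by
    intro b hb i z
    obtain ⟨x, rfl⟩ := hsurj b
    refine commute_of_spectralRadius_add_le (hπ i) (fun c => ?_) z
    obtain ⟨y, rfl⟩ := hsurj c
    rw [← map_add, hρ, hρ, hρ]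
    exact spectralRadius_add_le_of_commute (hback x y fun j hj => by rw [hb j hj]; simp)
  have hsepgood : ∀ b, (∀ i ∈ good, π i b = 0) → b = 0 := by
    intro b hb
    refine hsep b fun i => ?_
    by_contra hne
    have hcomm : ∀ y z : Matrix (n i) (n i) ℂ, y * z = z * y := by
      intro y z
      obtain ⟨y, rfl⟩ := hπ i y
      have h1 : z * (π i b * π i y) = π i b * π i y * z := by
        simpa using hcentral (b * y) (fun j hj => by rw [map_mul, hb j hj, zero_mul]) i z
      have h2 := hcentral b hb i
      refine sub_eq_zero.mp ((Matrix.eq_zero_or_eq_zero_of_mul_mul_eq_zero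
        (p := π i b) fun w => ?_).resolve_left hne)
      rw [← h2, mul_assoc, mul_sub, ← mul_assoc, ← h1, ← mul_assoc, h2, ← mul_assoc, sub_self,
        mul_zero]
    have hi : i ∈ good := fun x y _ => hcomm _ _
    exact hne (hb i hi)
  refine ⟨fun h => hback x y fun i _ => by rw [← map_mul, h, map_mul], fun h => ?_⟩
  rw [← sub_eq_zero]
  refine hsepgood _ fun i hi => ?_
  rw [map_sub, map_mul, map_mul, sub_eq_zero]
  exact hi x y (by rw [h, sub_self, map_zero, map_zero])

end Main

/-- Let `A` be a complex unital semisimple Banach algebra and `B` a complex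
unital Banach algebra having a separating family of finite-dimensional irreducible
representations. Any unital surjective linear spectral isometry `T : A → B` is a
Jordan morphism. -/
theorem spectral_isometry_is_jordan
    {A B : Type*} [NormedRing A] [NormedAlgebra ℂ A] [CompleteSpace A]
    [NormedRing B] [NormedAlgebra ℂ B] [CompleteSpace B]
    (hA : (⊥ : Ideal A).jacobson = ⊥)
    {ι : Type*} (n : ι → ℕ) (hn : ∀ i, 0 < n i)
    (π : ∀ i, B →ₐ[ℂ] Matrix (Fin (n i)) (Fin (n i)) ℂ)
    (hπcont : ∀ i, Continuous (π i))
    (hπsurj : ∀ i, Function.Surjective (π i))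
    (hsep : ∀ b : B, (∀ i, π i b = 0) → b = 0)
    (T : A →ₗ[ℂ] B) (hTsurj : Function.Surjective T) (hT1 : T 1 = 1)
    (hρ : ∀ a : A, spectralRadius ℂ (T a) = spectralRadius ℂ a) :
    ∀ a : A, T (a * a) = T a * T a := by
  have : ∀ i, Nonempty (Fin (n i)) := fun i => ⟨⟨0, hn i⟩⟩
  have hinj := injective_of_spectralRadius_eq hA hπsurj hsep hTsurj hT1 hρ
  have hcomm := map_commute_iff_of_spectralRadius_eq hinj hπsurj hsep hTsurj hT1 hρ
  intro a
  refine sub_eq_zero.mp (hsep _ fun i => ?_)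
  exact map_mul_self_of_representation (hπsurj i) hTsurj (fun x y => (hcomm x y).mpr)
    (spectralRadius_map_mul_self_sub_eq_zero hinj hTsurj hT1 hρ hcomm) a
end

section
/- Let A be a complex unital Banach algebra and let B be a complex unital Banach algebra possessing a separating family of finite-dimensional irreducible representations (i.e., there is a family of continuous unital surjective algebra homomorphisms π_i : B → M_{n_i}(ℂ) whose kernels have trivial intersection). If T : A → B is linear, surjective, T(1) = 1, and T(a) is invertible in B whenever a is invertible in A, then T is a Jordan morphism, i.e., T(a²) = T(a)² for all a ∈ A. -/
open Polynomial Matrix Topology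

/-- **Jacobi's formula** for a matrix of polynomials. -/
theorem Matrix.derivative_det {ν R : Type*} [Fintype ν] [DecidableEq ν] [CommRing R]
    (G : Matrix ν ν R[X]) :
    derivative G.det = (G.adjugate * G.map derivative).trace := by
  have h : ∀ i, (G.adjugate * G.map derivative) i i =
      (G.updateCol i fun j => derivative (G j i)).det := by
    intro i
    rw [← cramer_apply, cramer_eq_adjugate_mulVec]
    rfl
  simp only [trace, diag_apply, h, det_apply, derivative_sum]
  rw [Finset.sum_comm]
  refine Finset.sum_congr rfl fun σ _ => ?_
  rw [Units.smul_def, derivative_smul, derivative_prod_finset, ← Finset.smul_sum]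
  congr 1
  refine Finset.sum_congr rfl fun i _ => ?_
  rw [← Finset.prod_erase_mul _ _ (Finset.mem_univ i), updateCol_self]
  congr 1
  refine Finset.prod_congr rfl fun j hj => ?_
  rw [updateCol_ne (Finset.ne_of_mem_erase hj)]

theorem Matrix.map_derivative_mul {ν R : Type*} [Fintype ν] [CommRing R]
    (G H : Matrix ν ν R[X]) :
    (G * H).map derivative = G.map derivative * H + G * H.map derivative := by
  ext1 i j
  simp [mul_apply, derivative_mul, Finset.sum_add_distrib]

/-- The second derivative at `0` of the determinant of a polynomial matrix with value `1` at `0`. -/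
theorem Matrix.eval_zero_derivative_derivative_det {ν R : Type*} [Fintype ν] [DecidableEq ν]
    [CommRing R] (G : Matrix ν ν R[X]) (hG : G.map (eval 0) = 1) :
    (derivative (derivative G.det)).eval 0 =
      ((derivative G.det).eval 0) ^ 2
      - ((G.map derivative).map (eval 0) * (G.map derivative).map (eval 0)).trace
      + (((G.map derivative).map derivative).map (eval 0)).trace := by
  set e : Matrix ν ν R[X] →+* Matrix ν ν R := (evalRingHom 0).mapMatrix with he
  have he' : ∀ M : Matrix ν ν R[X], M.map (eval 0) = e M := fun M => rfl
  have htr : ∀ M : Matrix ν ν R[X], M.trace.eval 0 = (e M).trace := fun M => by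
    simp [trace, he, eval_finsetSum]
  have hdtr : ∀ M : Matrix ν ν R[X], derivative M.trace = (M.map derivative).trace := fun M => by
    simp [trace]
  simp only [he'] at hG ⊢
  have hadj : e G.adjugate = 1 := by
    have h : e G.adjugate = (e G).adjugate := RingHom.map_adjugate _ _
    rw [h, hG, adjugate_one]
  have hdadj : e (G.adjugate.map derivative) =
      (derivative G.det).eval 0 • (1 : Matrix ν ν R) - e (G.map derivative) := by
    have h := congrArg (fun M : Matrix ν ν R[X] => e (M.map derivative)) (adjugate_mul G)
    simp only [map_derivative_mul, map_add, map_mul, hG, hadj, mul_one, one_mul] at h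
    rw [eq_sub_iff_add_eq, h]
    ext i j
    by_cases hij : i = j <;> simp [he, hij]
  have hd : (derivative G.det).eval 0 = (e (G.map derivative)).trace := by
    rw [derivative_det, htr, map_mul, hadj, one_mul]
  rw [derivative_det, hdtr, map_derivative_mul, htr, ← derivative_det, map_add, map_mul, map_mul,
    hadj, hdadj, trace_add, sub_mul, trace_sub, smul_mul_assoc, one_mul, one_mul, trace_smul, hd]
  simp [sq]

/-- The logarithmic second derivative at `0` of a product of factors `X - r` is bounded through the
sum of the inverse squares of the `r`. -/
theorem Polynomial.norm_deriv_sq_sub_multiset_prod_le {R : ℝ} (s : Multiset ℂ)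
    (hs : ∀ r ∈ s, r ≠ 0 ∧ ‖r⁻¹‖ ≤ R) :
    (s.map (X - C ·)).prod.eval 0 ≠ 0 ∧
    ‖((derivative (s.map (X - C ·)).prod).eval 0 ^ 2
      - (derivative (derivative (s.map (X - C ·)).prod)).eval 0 * (s.map (X - C ·)).prod.eval 0)
      / (s.map (X - C ·)).prod.eval 0 ^ 2‖ ≤ Multiset.card s * R ^ 2 := by
  induction s using Multiset.induction with
  | empty => simp
  | cons r s ih =>
    obtain ⟨h0, ih⟩ := ih fun x hx => hs x (Multiset.mem_cons_of_mem hx)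
    obtain ⟨hr, hrR⟩ := hs r (Multiset.mem_cons_self r s)
    simp only [Multiset.map_cons, Multiset.prod_cons, Multiset.card_cons]
    generalize (s.map (X - C ·)).prod = p at *
    refine ⟨by simp [hr, h0], ?_⟩
    have key : ((derivative ((X - C r) * p)).eval 0 ^ 2
        - (derivative (derivative ((X - C r) * p))).eval 0 * ((X - C r) * p).eval 0)
        / ((X - C r) * p).eval 0 ^ 2 =
        r⁻¹ ^ 2 + ((derivative p).eval 0 ^ 2
        - (derivative (derivative p)).eval 0 * p.eval 0) / p.eval 0 ^ 2 := by
      simp only [derivative_mul, derivative_sub, derivative_X, derivative_C, eval_add, eval_mul,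
        eval_sub, eval_X, eval_C, sub_zero, one_mul, zero_sub, derivative_add]
      field_simp
      ring
    rw [key]
    refine (norm_add_le _ _).trans ?_
    have : ‖r⁻¹ ^ 2‖ ≤ R ^ 2 := by
      rw [norm_pow]
      gcongr
    push_cast
    linarith

/-- The sum of the inverse squares of the roots is controlled by their number and size. -/
theorem Polynomial.norm_deriv_sq_sub_le {R : ℝ} {q : ℂ[X]} (h0 : q.eval 0 = 1)
    (hroots : ∀ r, q.eval r = 0 → ‖r⁻¹‖ ≤ R) :
    ‖(derivative q).eval 0 ^ 2 - (derivative (derivative q)).eval 0‖ ≤ q.natDegree * R ^ 2 := by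
  have hq : q ≠ 0 := by rintro rfl; simp at h0
  have hs : ∀ r ∈ q.roots, r ≠ 0 ∧ ‖r⁻¹‖ ≤ R := fun r hr => by
    have hr' : q.eval r = 0 := (mem_roots hq).1 hr
    refine ⟨?_, hroots r hr'⟩
    rintro rfl
    simp [h0] at hr'
  obtain ⟨hp, hle⟩ := norm_deriv_sq_sub_multiset_prod_le q.roots hs
  have hfac := (IsAlgClosed.splits q).eq_prod_roots
  have hlc : q.leadingCoeff ≠ 0 := leadingCoeff_ne_zero.2 hq
  generalize (q.roots.map (X - C ·)).prod = p at *
  have hle' := hle.trans (mul_le_mul_of_nonneg_right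
    (Nat.cast_le.2 (card_roots' q)) (sq_nonneg R))
  refine le_of_eq_of_le (congrArg norm ?_) hle'
  have e0 : q.leadingCoeff * p.eval 0 = 1 := by
    rw [← h0]
    conv_rhs => rw [hfac]
    simp
  generalize q.leadingCoeff = c at *
  subst hfac
  simp only [derivative_mul, derivative_C, zero_mul, zero_add, eval_mul, eval_C]
  rw [eq_div_iff (pow_ne_zero 2 hp)]
  linear_combination ((derivative p).eval 0 ^ 2 * (c * p.eval 0 + 1)
    - (derivative (derivative p)).eval 0 * p.eval 0) * e0

theorem Matrix.natDegree_det_le {ν R : Type*} [Fintype ν] [DecidableEq ν] [CommRing R]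
    (G : Matrix ν ν R[X]) {m : ℕ} (hG : ∀ i j, (G i j).natDegree ≤ m) :
    G.det.natDegree ≤ Fintype.card ν * m := by
  rw [det_apply]
  refine natDegree_sum_le_of_forall_le _ _ fun σ _ => ?_
  rw [Units.smul_def]
  refine (natDegree_smul_le _ _).trans ((natDegree_prod_le _ _).trans ?_)
  refine (Finset.sum_le_card_nsmul _ _ m fun i _ => hG _ _).trans ?_
  simp

/-- Two expressions in `(1 + t s)⁻¹` agreeing for small `t` have the same derivative at `t = 0`. -/
theorem deriv_ringInverse_mul_eq {M : Type*} [NormedRing M] [NormedAlgebra ℂ M]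
    [CompleteSpace M] (tr : M →L[ℂ] ℂ) (s v w y z : M)
    (h : ∀ᶠ t : ℂ in 𝓝 0, tr (Ring.inverse (1 + t • s) * (y + t • z)) =
      tr ((Ring.inverse (1 + t • s) * (v + t • w)) * (Ring.inverse (1 + t • s) * (v + t • w)))) :
    tr (z - s * y) = tr ((w - s * v) * v + v * (w - s * v)) := by
  have hlin : ∀ y z : M, HasDerivAt (fun t : ℂ => y + t • z) z 0 := fun y z => by
    have h := ((hasDerivAt_id (0 : ℂ)).smul_const z).const_add y
    rwa [one_smul] at h
  have hinv : HasDerivAt (fun t : ℂ => Ring.inverse (1 + t • s)) (-s) 0 := by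
    have h := HasFDerivAt.comp_hasDerivAt_of_eq (0 : ℂ)
      (hasFDerivAt_ringInverse (𝕜 := ℂ) (1 : Mˣ)) (hlin 1 s) (by simp)
    simpa [Function.comp_def] using h
  have hprod : ∀ y z : M, HasDerivAt (fun t : ℂ => Ring.inverse (1 + t • s) * (y + t • z))
      (z - s * y) 0 := fun y z => by
    have h := hinv.fun_mul (hlin y z)
    simpa [sub_eq_neg_add] using h
  have hL := tr.hasFDerivAt.comp_hasDerivAt (0 : ℂ) (hprod y z)
  have hR := tr.hasFDerivAt.comp_hasDerivAt (0 : ℂ) ((hprod v w).fun_mul (hprod v w))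
  have key := hL.unique (hR.congr_of_eventuallyEq h)
  simpa using key

section InvertibilityPreserver

variable {A ν : Type*} [NormedRing A] [NormedAlgebra ℂ A] [CompleteSpace A]
  [Fintype ν] [DecidableEq ν]

/-- All zeros `μ` of the polynomial `det S ((1 + μ a) ^ m)` satisfy `‖μ‖⁻¹ ≤ ‖a‖`; this bounds the
logarithmic second derivative at `0`, linearly in `m`. -/
theorem norm_trace_sq_sub_le (S : A →ₗ[ℂ] Matrix ν ν ℂ) (h1 : S 1 = 1)
    (hinv : ∀ a, IsUnit a → IsUnit (S a)) (a : A) (m : ℕ) :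
    ‖(m : ℂ) ^ 2 * (S a * S a).trace - m * (m - 1) * (S (a * a)).trace‖
      ≤ Fintype.card ν * m * ‖a‖ ^ 2 := by
  set G : Matrix ν ν ℂ[X] := of fun i j =>
    ∑ k ∈ Finset.range (m + 1), C ((m.choose k : ℂ) * S (a ^ k) i j) * X ^ k with hGdef
  have hGeval : ∀ μ : ℂ, G.map (eval μ) = S ((μ • a + 1) ^ m) := by
    intro μ
    rw [(Commute.one_right (μ • a)).add_pow]
    ext i j
    simp only [hGdef, map_apply, of_apply, eval_finsetSum, one_pow, mul_one, map_sum,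
      Matrix.sum_apply]
    refine Finset.sum_congr rfl fun k _ => ?_
    have hterm : (μ • a) ^ k * (m.choose k : A) = ((m.choose k : ℂ) * μ ^ k) • a ^ k := by
      rw [_root_.smul_pow, ← Nat.cast_comm, ← nsmul_eq_mul, mul_smul, Nat.cast_smul_eq_nsmul]
    rw [hterm, S.map_smul, Matrix.smul_apply, smul_eq_mul]
    simp only [eval_mul, eval_C, eval_pow, eval_X]
    ring
  have hcoeff : ∀ k i j, (G i j).coeff k = (m.choose k : ℂ) * S (a ^ k) i j := by
    intro k i j
    simp only [hGdef, of_apply, finsetSum_coeff, coeff_C_mul_X_pow]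
    rw [Finset.sum_ite_eq]
    split_ifs with h
    · rfl
    · rw [Nat.choose_eq_zero_of_lt (by simpa using h)]
      simp
  have hG0 : G.map (eval 0) = 1 := by simp [hGeval, h1]
  have hdeg : G.det.natDegree ≤ Fintype.card ν * m := by
    refine natDegree_det_le G fun i j => ?_
    rw [hGdef, of_apply]
    refine natDegree_sum_le_of_forall_le _ _ fun k hk => ?_
    exact (natDegree_C_mul_X_pow_le _ _).trans (Nat.lt_succ_iff.1 (Finset.mem_range.1 hk))
  have hdet : ∀ μ : ℂ, G.det.eval μ = (S ((μ • a + 1) ^ m)).det := fun μ => by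
    rw [← hGeval]
    exact RingHom.map_det (evalRingHom μ) G
  have hroots : ∀ r, G.det.eval r = 0 → ‖r⁻¹‖ ≤ ‖a‖ := by
    intro r hr
    by_contra! hlt
    have hr0 : r ≠ 0 := by
      rintro rfl
      simp at hlt
      linarith [norm_nonneg a]
    have hu : IsUnit (r • a + 1) := by
      have := isUnit_one_sub_of_norm_lt_one (x := -(r • a)) (by
        rw [norm_neg, norm_smul]
        rwa [norm_inv, ← one_div, lt_div_iff₀' (norm_pos_iff.2 hr0)] at hlt)
      rwa [sub_neg_eq_add, add_comm] at this
    have := (isUnit_iff_isUnit_det _).1 (hinv _ (hu.pow m))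
    rw [← hdet, hr] at this
    exact not_isUnit_zero this
  have hM1 : (G.map derivative).map (eval 0) = (m : ℂ) • S a := by
    ext i j
    simp [← coeff_zero_eq_eval_zero, coeff_derivative, hcoeff]
  have hM2 : ((G.map derivative).map derivative).map (eval 0)
      = ((m : ℂ) * (m - 1)) • S (a * a) := by
    ext i j
    simp [← coeff_zero_eq_eval_zero, coeff_derivative, hcoeff, Nat.cast_choose_two, sq]
    ring
  have hle := Polynomial.norm_deriv_sq_sub_le (by simp [hdet, h1]) hroots
  rw [eval_zero_derivative_derivative_det G hG0, hM1, hM2] at hle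
  have hle' := hle.trans (mul_le_mul_of_nonneg_right (Nat.cast_le.2 hdeg) (sq_nonneg _))
  push_cast at hle'
  refine le_of_eq_of_le (congrArg norm ?_) hle'
  simp only [smul_mul_smul_comm, trace_smul, smul_eq_mul]
  ring

/-- A unital invertibility-preserving linear map into matrices preserves squares under the trace. -/
theorem trace_mul_self (S : A →ₗ[ℂ] Matrix ν ν ℂ) (h1 : S 1 = 1)
    (hinv : ∀ a, IsUnit a → IsUnit (S a)) (a : A) :
    (S a * S a).trace = (S (a * a)).trace := by
  by_contra hne
  set d := (S a * S a).trace - (S (a * a)).trace with hd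
  have hd0 : 0 < ‖d‖ := norm_pos_iff.2 (sub_ne_zero.2 hne)
  set K := Fintype.card ν * ‖a‖ ^ 2 + ‖(S (a * a)).trace‖
  obtain ⟨m, hm⟩ := exists_nat_gt (max 1 (K / ‖d‖))
  have hm0 : (0 : ℝ) < m := by linarith [le_max_left 1 (K / ‖d‖)]
  have hmd : K < m * ‖d‖ := (div_lt_iff₀ hd0).1 ((le_max_right _ _).trans_lt hm)
  have h := norm_trace_sq_sub_le S h1 hinv a m
  have heq : (m : ℂ) ^ 2 * d = ((m : ℂ) ^ 2 * (S a * S a).trace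
      - m * (m - 1) * (S (a * a)).trace) - m * (S (a * a)).trace := by
    rw [hd]; ring
  have h2 : ‖(m : ℂ) ^ 2 * d‖ ≤ m * K := by
    rw [heq]
    refine (norm_sub_le _ _).trans ?_
    rw [norm_mul (m : ℂ), Complex.norm_natCast]
    simp only [K]
    linarith
  rw [norm_mul, norm_pow, Complex.norm_natCast] at h2
  nlinarith

attribute [local instance] Matrix.linftyOpNormedRing Matrix.linftyOpNormedAlgebra

/-- The derivative at `t = 0` of `trace_mul_self` for the maps
`S (1 + t b)⁻¹ * S ((1 + t b) * ·)`. -/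
theorem trace_mul_self_variation (S : A →ₗ[ℂ] Matrix ν ν ℂ) (h1 : S 1 = 1)
    (hinv : ∀ a, IsUnit a → IsUnit (S a)) (b x : A) :
    (S (b * x * x)).trace - (S b * S (x * x)).trace =
      2 * (S x * S (b * x)).trace - 2 * (S b * S x * S x).trace := by
  set inv : ℂ → Matrix ν ν ℂ := fun t => Ring.inverse (1 + t • S b)
  have hev : ∀ᶠ t : ℂ in 𝓝 0, IsUnit (1 + t • b) := by
    have : ContinuousAt (fun t : ℂ => 1 + t • b) 0 := by fun_prop
    refine this.eventually_mem (Units.isOpen.mem_nhds ?_)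
    simp
  let tr : Matrix ν ν ℂ →L[ℂ] ℂ := ⟨traceLinearMap ν ℂ ℂ, Continuous.matrix_trace continuous_id⟩
  have h := deriv_ringInverse_mul_eq tr (S b) (S x) (S (b * x)) (S (x * x)) (S (b * x * x)) (by
    filter_upwards [hev] with t ht
    have hSu : S (1 + t • b) = 1 + t • S b := by simp [h1]
    have hu : IsUnit (1 + t • S b) := hSu ▸ hinv _ ht
    have hui : IsUnit (inv t) := hu.ringInverse
    let S' : A →ₗ[ℂ] Matrix ν ν ℂ :=
      LinearMap.mulLeft ℂ (inv t) ∘ₗ S ∘ₗ LinearMap.mulLeft ℂ (1 + t • b)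
    have hS' : ∀ y, S' y = inv t * (S y + t • S (b * y)) := fun y => by
      simp [S', add_mul]
    have key := trace_mul_self S'
      (by rw [hS', mul_one, h1]; exact Ring.inverse_mul_cancel _ hu)
      (fun y hy => hui.mul (hinv _ (ht.mul hy))) x
    simp only [hS', ← mul_assoc b] at key
    exact key.symm)
  replace h : Matrix.trace _ = Matrix.trace _ := h
  simp only [mul_sub, sub_mul, trace_add, trace_sub] at h
  have c1 : (S x * (S b * S x)).trace = (S b * S x * S x).trace := by
    rw [trace_mul_comm]
  have c2 := trace_mul_comm (S (b * x)) (S x)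
  linear_combination h - c1 + c2

theorem trace_mul_map_sq (S : A →ₗ[ℂ] Matrix ν ν ℂ) (h1 : S 1 = 1)
    (hinv : ∀ a, IsUnit a → IsUnit (S a)) (b x : A) :
    (S b * S (x * x)).trace = (S b * (S x * S x)).trace := by
  have hpol : ∀ y z, 2 * (S y * S z).trace = (S (y * z)).trace + (S (z * y)).trace := by
    intro y z
    have h := trace_mul_self S h1 hinv (y + z)
    simp only [map_add, mul_add, add_mul, trace_add] at h
    have hy := trace_mul_self S h1 hinv y
    have hz := trace_mul_self S h1 hinv z
    have hc := trace_mul_comm (S y) (S z)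
    linear_combination h - hy - hz + hc
  have hcub : ∀ b x, 4 * (S b * S x * S x).trace =
      2 * (S (x * b * x)).trace + (S (b * x * x)).trace + (S (x * x * b)).trace := by
    intro b x
    have h := trace_mul_self_variation S h1 hinv b x
    have p1 := hpol b (x * x)
    have p2 := hpol x (b * x)
    simp only [← mul_assoc] at p1 p2
    linear_combination 2 * h + 2 * p2 + p1
  have hb := hcub b x
  have hx := hcub x x
  have hplus := hcub x (x + b)
  have hbb := hcub x b
  have p1 := hpol b (x * x)
  simp only [map_add, mul_add, add_mul, trace_add, ← mul_assoc] at hplus p1 ⊢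
  have c1 : (S x * S b * S x).trace = (S b * S x * S x).trace := by
    rw [mul_assoc, trace_mul_comm]
  have c2 : (S x * S x * S b).trace = (S b * S x * S x).trace := by
    rw [trace_mul_comm, mul_assoc]
  linear_combination (1 / 4 : ℂ) * (2 * p1 + hb - (hplus - hx - hbb) + 4 * c1 + 4 * c2)

/-- A unital surjective linear map from a Banach algebra onto a matrix algebra that preserves
invertibility is a Jordan morphism. -/
theorem map_mul_self_of_surjective (S : A →ₗ[ℂ] Matrix ν ν ℂ)
    (hS : Function.Surjective S) (h1 : S 1 = 1)
    (hinv : ∀ a, IsUnit a → IsUnit (S a)) (x : A) : S (x * x) = S x * S x := by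
  rw [ext_iff_trace_mul_left]
  intro y
  obtain ⟨b, rfl⟩ := hS y
  exact trace_mul_map_sq S h1 hinv b x

end InvertibilityPreserver

/-- Aupetit. Let `A` be a complex unital Banach algebra and `B` a complex
unital Banach algebra having a separating family of finite-dimensional irreducible
representations. Any unital surjective linear invertibility-preserving map `T : A → B`
is a Jordan morphism. -/
theorem invertibility_preserver_is_jordan
    {A B : Type*} [NormedRing A] [NormedAlgebra ℂ A] [CompleteSpace A]
    [NormedRing B] [NormedAlgebra ℂ B] [CompleteSpace B]
    {ι : Type*} (n : ι → ℕ) (hn : ∀ i, 0 < n i)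
    (π : ∀ i, B →ₐ[ℂ] Matrix (Fin (n i)) (Fin (n i)) ℂ)
    (hπcont : ∀ i, Continuous (π i))
    (hπsurj : ∀ i, Function.Surjective (π i))
    (hsep : ∀ b : B, (∀ i, π i b = 0) → b = 0)
    (T : A →ₗ[ℂ] B) (hTsurj : Function.Surjective T) (hT1 : T 1 = 1)
    (hinv : ∀ a : A, IsUnit a → IsUnit (T a)) :
    ∀ a : A, T (a * a) = T a * T a := by
  intro a
  refine sub_eq_zero.1 (hsep _ fun i => ?_)
  have h := map_mul_self_of_surjective ((π i).toLinearMap ∘ₗ T)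
    ((hπsurj i).comp hTsurj) (by simp [hT1]) (fun a ha => (hinv a ha).map (π i)) a
  simpa [sub_eq_zero] using h
end

section
/- Let A and B be complex unital Banach algebras and let T : A → B be a linear bijection satisfying ρ_B(T(a)) = ρ_A(a) for every a ∈ A. Then T maps the Jacobson radical of A onto the Jacobson radical of B, i.e., T(Rad(A)) = Rad(B). -/
open Filter Topology
open scoped ENNReal

section Jacobson

/-- An element congruent to `1` modulo the Jacobson radical is a unit. -/
theorem isUnit_one_add_of_mem_jacobson_bot {R : Type*} [Ring R] {r : R}
    (hr : r ∈ (⊥ : Ideal R).jacobson) : IsUnit (1 + r) := by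
  have left_inverse : ∀ s ∈ (⊥ : Ideal R).jacobson, ∃ t, t * (1 + s) = 1 := fun s hs ↦ by
    obtain ⟨t, ht⟩ := Ideal.exists_mul_add_sub_mem_of_mem_jacobson s hs
    exact ⟨t, by rwa [Ideal.mem_bot, sub_eq_zero, add_comm] at ht⟩
  obtain ⟨t, ht⟩ := left_inverse r hr
  obtain ⟨v, hv⟩ := left_inverse (-(t * r)) (neg_mem (Ideal.mul_mem_left _ t hr))
  have h : 1 + -(t * r) = t := by rw [← ht]; noncomm_ring
  rw [h] at hv
  have hv' : v = 1 + r := left_inv_eq_right_inv hv ht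
  exact ⟨⟨1 + r, t, hv' ▸ hv, ht⟩, rfl⟩

/-- A perturbation of a unit by an element of the Jacobson radical is a unit. -/
theorem IsUnit.add_of_mem_jacobson_bot {R : Type*} [Ring R] {u r : R} (hu : IsUnit u)
    (hr : r ∈ (⊥ : Ideal R).jacobson) : IsUnit (u + r) := by
  obtain ⟨u, rfl⟩ := hu
  have h := u.isUnit.mul
    (isUnit_one_add_of_mem_jacobson_bot (Ideal.mul_mem_left _ (↑u⁻¹ : R) hr))
  rwa [mul_add, mul_one, Units.mul_inv_cancel_left] at h

/-- Perturbation by the Jacobson radical does not change the spectrum. -/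
theorem spectrum_add_of_mem_jacobson_bot {𝕜 A : Type*} [CommRing 𝕜] [Ring A] [Algebra 𝕜 A]
    {r : A} (hr : r ∈ (⊥ : Ideal A).jacobson) (x : A) :
    spectrum 𝕜 (x + r) = spectrum 𝕜 x := by
  ext k
  rw [spectrum.mem_iff, spectrum.mem_iff, not_iff_not]
  constructor <;> intro h
  · simpa [sub_add_eq_sub_sub] using h.add_of_mem_jacobson_bot hr
  · simpa [sub_add_eq_sub_sub, sub_eq_add_neg, add_assoc, add_comm]
      using h.add_of_mem_jacobson_bot (neg_mem hr)

/-- If `a - k` lies in a proper left ideal, then `k` lies in the spectrum of `a`. -/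
theorem Ideal.mem_spectrum_of_sub_mem {𝕜 A : Type*} [CommRing 𝕜] [Ring A] [Algebra 𝕜 A]
    {L : Ideal A} (hL : L ≠ ⊤) {a : A} {k : 𝕜} (h : a - algebraMap 𝕜 A k ∈ L) :
    k ∈ spectrum 𝕜 a := by
  refine fun hu ↦ hL (L.eq_top_of_isUnit_mem ?_ hu)
  simpa using neg_mem h

/-- If `b` lies outside a maximal left ideal `L`, then `b` generates `A` modulo `L`. -/
theorem Ideal.IsMaximal.exists_mul_sub_mem {A : Type*} [Ring A] {L : Ideal A}
    (hL : L.IsMaximal) {b : A} (hb : b ∉ L) (y : A) : ∃ x, x * b - y ∈ L := by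
  have h : L ⊔ Ideal.span {b} = ⊤ :=
    hL.1.2 _ (left_lt_sup.2 (by simpa [Ideal.span_le] using hb))
  obtain ⟨l, hl, w, hw, hlw⟩ := Submodule.mem_sup.1 (h ▸ Submodule.mem_top : y ∈ _)
  obtain ⟨x, rfl⟩ := Ideal.mem_span_singleton'.1 hw
  exact ⟨x, by simpa [← hlw] using hl⟩

end Jacobson

section BanachAlgebra

variable {A : Type*} [NormedRing A] [NormedAlgebra ℂ A]

/-- The continuous operator induced by right multiplication on the quotient by a left ideal. -/
noncomputable def Ideal.quotientMulRight (L : Ideal A) (a : A) (ha : ∀ l ∈ L, l * a ∈ L) :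
    (A ⧸ L) →L[ℂ] (A ⧸ L) where
  toLinearMap := (L.mapQ L (LinearMap.toSpanSingleton A A a) ha).restrictScalars ℂ
  cont := by
    refine L.isQuotientMap_mkQL.continuous_iff.2 ?_
    exact L.mkQL.continuous.comp (continuous_id.mul continuous_const)

theorem Ideal.quotientMulRight_mk (L : Ideal A) (a : A) (ha : ∀ l ∈ L, l * a ∈ L) (x : A) :
    L.quotientMulRight a ha (Submodule.Quotient.mk x) = Submodule.Quotient.mk (x * a) := rfl

variable [CompleteSpace A]

/-- An element which idealizes a maximal left ideal is a scalar modulo that ideal. -/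
theorem Ideal.IsMaximal.exists_sub_algebraMap_mem {L : Ideal A} (hL : L.IsMaximal) {a : A}
    (ha : ∀ l ∈ L, l * a ∈ L) : ∃ k : ℂ, a - algebraMap ℂ A k ∈ L := by
  have : Nontrivial (A ⧸ L) := Submodule.Quotient.nontrivial_iff.2 hL.ne_top
  obtain ⟨k, hk⟩ := spectrum.nonempty (L.quotientMulRight a ha)
  refine ⟨k, by_contra fun hb ↦ ?_⟩
  set b := a - algebraMap ℂ A k with hb_def
  have hLb : ∀ l ∈ L, l * b ∈ L := fun l hl ↦ by
    rw [hb_def, mul_sub, ← Algebra.commutes]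
    exact sub_mem (ha l hl) (Ideal.mul_mem_left _ _ hl)
  have apply_eq : ∀ x : A, (algebraMap ℂ _ k - L.quotientMulRight a ha) (Submodule.Quotient.mk x)
      = -Submodule.Quotient.mk (x * b) := fun x ↦ by
    rw [sub_apply, L.quotientMulRight_mk,
      ContinuousLinearMap.algebraMap_apply, ← Submodule.Quotient.mk_smul,
      ← Submodule.Quotient.mk_sub, ← Submodule.Quotient.mk_neg, hb_def, mul_sub,
      ← Algebra.commutes, ← Algebra.smul_def, neg_sub]
  refine hk (ContinuousLinearMap.isUnit_iff_bijective.2 ⟨?_, ?_⟩)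
  · rw [injective_iff_map_eq_zero]
    intro q
    induction q using Submodule.Quotient.induction_on with | _ x
    rw [apply_eq, neg_eq_zero, Submodule.Quotient.mk_eq_zero, Submodule.Quotient.mk_eq_zero]
    intro hx
    have hone : (1 : A) ∉ Submodule.comap (LinearMap.toSpanSingleton A A b) L := fun h ↦
      hb (one_mul b ▸ (h : 1 * b ∈ L))
    have hker : L = Submodule.comap (LinearMap.toSpanSingleton A A b) L :=
      hL.eq_of_le (fun h ↦ hone (h ▸ Submodule.mem_top)) hLb
    rw [hker]
    exact hx
  · intro q
    induction q using Submodule.Quotient.induction_on with | _ y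
    obtain ⟨x, hx⟩ := hL.exists_mul_sub_mem hb (-y)
    refine ⟨Submodule.Quotient.mk x, ?_⟩
    rw [apply_eq, ← Submodule.Quotient.mk_neg, Submodule.Quotient.eq]
    simpa [sub_eq_add_neg, add_comm] using neg_mem hx

/-- The subspace of all elements whose addition does not affect the spectral radius. -/
def spectralRadiusNullspace (A : Type*) [NormedRing A] [NormedAlgebra ℂ A] : Submodule ℂ A where
  carrier := {a | ∀ (z : ℂ) (x : A), spectralRadius ℂ (x + z • a) = spectralRadius ℂ x}
  zero_mem' z x := by simp
  add_mem' ha hb z x := by rw [smul_add, ← add_assoc, hb, ha]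
  smul_mem' c a ha z x := by rw [smul_smul, ha]

end BanachAlgebra

theorem mem_spectralRadiusNullspace {A : Type*} [NormedRing A] [NormedAlgebra ℂ A] {a : A} :
    a ∈ spectralRadiusNullspace A ↔
      ∀ (z : ℂ) (x : A), spectralRadius ℂ (x + z • a) = spectralRadius ℂ x := Iff.rfl

section Nullspace

variable {A : Type*} [NormedRing A] [NormedAlgebra ℂ A]

theorem spectralRadius_units_conjugate (u : Aˣ) (a : A) :
    spectralRadius ℂ (u * a * ↑u⁻¹) = spectralRadius ℂ a := by
  simp only [spectralRadius, spectrum.units_conjugate]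

theorem units_conjugate_mem_spectralRadiusNullspace {a : A} (ha : a ∈ spectralRadiusNullspace A)
    (u : Aˣ) : u * a * ↑u⁻¹ ∈ spectralRadiusNullspace A := fun z x ↦ by
  have h : x + z • (u * a * ↑u⁻¹ : A) = u * (↑u⁻¹ * x * u + z • a) * ↑u⁻¹ := by
    simp [mul_add, add_mul, mul_assoc]
  rw [h, spectralRadius_units_conjugate, mem_spectralRadiusNullspace.1 ha]
  simpa using spectralRadius_units_conjugate u⁻¹ x

theorem spectralRadius_eq_zero_of_mem_nullspace {a : A} (ha : a ∈ spectralRadiusNullspace A) :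
    spectralRadius ℂ a = 0 := by
  simpa using mem_spectralRadiusNullspace.1 ha 1 0

theorem eq_zero_of_mem_spectrum_of_spectralRadius_eq_zero {a : A} (ha : spectralRadius ℂ a = 0)
    {k : ℂ} (hk : k ∈ spectrum ℂ a) : k = 0 := by
  have h : (‖k‖₊ : ℝ≥0∞) ≤ spectralRadius ℂ a :=
    le_iSup₂ (f := fun (k : ℂ) (_ : k ∈ spectrum ℂ a) ↦ (‖k‖₊ : ℝ≥0∞)) k hk
  simpa [ha] using h

variable [CompleteSpace A]

theorem spectralRadius_le_nnnorm_mul_nnnorm_one (a : A) :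
    spectralRadius ℂ a ≤ ((‖a‖₊ * ‖(1 : A)‖₊ : NNReal) : ℝ≥0∞) :=
  iSup₂_le fun _ hk ↦ ENNReal.coe_le_coe.2 (spectrum.norm_le_norm_mul_of_mem hk)

/-- Commutators with an element of the nullspace are quasinilpotent. -/
theorem spectralRadius_commutator_eq_zero {a : A} (ha : a ∈ spectralRadiusNullspace A) (x : A) :
    spectralRadius ℂ (x * a - a * x) = 0 := by
  set c := x * a - a * x with hc
  have hcont : Tendsto (fun t : ℂ ↦ 1 - t • x) (𝓝 0) (𝓝 (1 : A)) := by
    have h : Continuous fun t : ℂ ↦ 1 - t • x := by fun_prop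
    simpa using h.tendsto 0
  have hinv : Tendsto (fun t : ℂ ↦ Ring.inverse (1 - t • x)) (𝓝 0) (𝓝 (1 : A)) := by
    have h := (NormedRing.inverse_continuousAt (1 : Aˣ)).tendsto
    rw [Units.val_one, Ring.inverse_one] at h
    exact h.comp hcont
  have hlim : Tendsto (fun t : ℂ ↦
      ((‖c - c * Ring.inverse (1 - t • x)‖₊ * ‖(1 : A)‖₊ : NNReal) : ℝ≥0∞)) (𝓝[≠] 0) (𝓝 0) := by
    have h := ((tendsto_const_nhds (x := c)).sub
      ((tendsto_const_nhds (x := c)).mul hinv)).nnnorm.mul_const ‖(1 : A)‖₊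
    simp only [mul_one, sub_self, nnnorm_zero, zero_mul] at h
    exact (ENNReal.tendsto_coe.2 h).mono_left nhdsWithin_le_nhds
  refine le_antisymm (ge_of_tendsto hlim ?_) zero_le
  filter_upwards [self_mem_nhdsWithin, nhdsWithin_le_nhds
    (hcont.eventually (Units.isOpen.mem_nhds isUnit_one))] with t ht hu
  obtain ⟨u, hu⟩ := hu
  have hmem : c * Ring.inverse (1 - t • x) ∈ spectralRadiusNullspace A := by
    have h := Submodule.smul_mem _ (-t⁻¹)
      (sub_mem (units_conjugate_mem_spectralRadiusNullspace ha u) ha)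
    convert h using 1
    have hcomm : (u : A) * a * ↑u⁻¹ - a = (u * a - a * u) * ↑u⁻¹ := by
      rw [sub_mul, Units.mul_inv_cancel_right]
    have hscale : (u : A) * a - a * u = -t • c := by
      rw [hu, hc]
      simp only [sub_mul, mul_sub, one_mul, mul_one, smul_mul_assoc, mul_smul_comm, smul_sub,
        neg_smul]
      abel
    rw [hcomm, hscale, ← hu, Ring.inverse_unit, smul_mul_assoc, smul_smul, neg_mul_neg,
      inv_mul_cancel₀ ht, one_smul]
  have h := mem_spectralRadiusNullspace.1 hmem (-1) c
  rw [neg_one_smul, ← sub_eq_add_neg] at h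
  rw [← h]
  exact spectralRadius_le_nnnorm_mul_nnnorm_one _

/-- The Jacobson radical consists of the elements whose addition does not affect the spectral
radius. -/
theorem mem_jacobson_bot_iff_mem_spectralRadiusNullspace {a : A} :
    a ∈ (⊥ : Ideal A).jacobson ↔ a ∈ spectralRadiusNullspace A := by
  constructor
  · intro ha z x
    have hz : z • a ∈ (⊥ : Ideal A).jacobson := by
      rw [Algebra.smul_def]
      exact Ideal.mul_mem_left _ _ ha
    simp only [spectralRadius, spectrum_add_of_mem_jacobson_bot hz]
  · intro ha
    refine Submodule.mem_sInf.2 fun L hL ↦ ?_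
    replace hL : Ideal.IsMaximal L := hL.2
    by_cases hLa : ∀ l ∈ L, l * a ∈ L
    · obtain ⟨k, hk⟩ := hL.exists_sub_algebraMap_mem hLa
      have hk0 : k = 0 := eq_zero_of_mem_spectrum_of_spectralRadius_eq_zero
        (spectralRadius_eq_zero_of_mem_nullspace ha) (Ideal.mem_spectrum_of_sub_mem hL.ne_top hk)
      simpa [hk0] using hk
    · push Not at hLa
      obtain ⟨l, hl, hla⟩ := hLa
      obtain ⟨x, hx⟩ := hL.exists_mul_sub_mem hla 1
      have hcomm : x * l * a - a * (x * l) - algebraMap ℂ A 1 ∈ L := by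
        have h := sub_mem hx (Ideal.mul_mem_left L a (Ideal.mul_mem_left L x hl))
        rwa [← mul_assoc, sub_right_comm, ← map_one (algebraMap ℂ A)] at h
      exact absurd (eq_zero_of_mem_spectrum_of_spectralRadius_eq_zero
        (spectralRadius_commutator_eq_zero ha (x * l))
        (Ideal.mem_spectrum_of_sub_mem hL.ne_top hcomm)) one_ne_zero

end Nullspace

/-- A linear bijection between complex unital Banach algebras preserving the
spectral radius maps the Jacobson radical onto the Jacobson radical. -/
theorem spectral_isometry_maps_radical_onto_radical
    {A B : Type*} [NormedRing A] [NormedAlgebra ℂ A] [CompleteSpace A]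
    [NormedRing B] [NormedAlgebra ℂ B] [CompleteSpace B]
    (T : A ≃ₗ[ℂ] B)
    (hρ : ∀ a : A, spectralRadius ℂ (T a) = spectralRadius ℂ a) :
    T '' ((⊥ : Ideal A).jacobson : Set A) = ((⊥ : Ideal B).jacobson : Set B) := by
  ext b
  obtain ⟨a, rfl⟩ := T.surjective b
  rw [T.injective.mem_set_image, SetLike.mem_coe, SetLike.mem_coe,
    mem_jacobson_bot_iff_mem_spectralRadiusNullspace,
    mem_jacobson_bot_iff_mem_spectralRadiusNullspace, mem_spectralRadiusNullspace,
    mem_spectralRadiusNullspace]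
  simp only [T.surjective.forall, ← map_smul, ← map_add, hρ]
end

section
/- Let A and B be complex unital semisimple Banach algebras with B commutative, and let T : A → B be a unital, linear, bijective map satisfying ρ_B(T(a)) = ρ_A(a) for every a ∈ A. Then A is commutative. -/
open NormedSpace

/-- An element of a commutative complex Banach algebra killed by every character lies in the
Jacobson radical. -/
theorem mem_jacobson_bot_of_forall_character_eq_zero
    {B : Type*} [NormedCommRing B] [NormedAlgebra ℂ B] [CompleteSpace B] {b : B}
    (hb : ∀ χ : WeakDual.characterSpace ℂ B, χ b = 0) : b ∈ (⊥ : Ideal B).jacobson := by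
  rw [Ideal.mem_jacobson_bot]
  intro y
  by_contra h
  obtain ⟨χ, hχ⟩ := WeakDual.CharacterSpace.exists_apply_eq_zero h
  simp [hb χ] at hχ

/-- The value of a character is bounded by the spectral radius. -/
theorem enorm_character_apply_le_spectralRadius
    {B : Type*} [NormedRing B] [NormedAlgebra ℂ B]
    (χ : WeakDual.characterSpace ℂ B) (b : B) : ‖χ b‖ₑ ≤ spectralRadius ℂ b :=
  le_iSup₂_of_le (χ b) (AlgHom.apply_mem_spectrum χ b) le_rfl

/-- The spectral radius is bounded by the norm, up to the norm of the unit. -/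
theorem spectralRadius_le_enorm_mul_enorm_one
    {A : Type*} [NormedRing A] [NormedAlgebra ℂ A] [CompleteSpace A] (a : A) :
    spectralRadius ℂ a ≤ ‖a‖ₑ * ‖(1 : A)‖ₑ := by
  refine iSup₂_le fun k hk => ?_
  have := spectrum.norm_le_norm_mul_of_mem hk
  rw [enorm_eq_nnnorm, enorm_eq_nnnorm]
  exact_mod_cast this

/-- The spectral radius is invariant under conjugation by exponentials. -/
theorem spectralRadius_exp_mul_mul_exp_neg
    {A : Type*} [NormedRing A] [NormedAlgebra ℂ A] [CompleteSpace A] (a b : A) :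
    spectralRadius ℂ (exp a * b * exp (-a)) = spectralRadius ℂ b := by
  let : NormedAlgebra ℚ A := NormedAlgebra.restrictScalars ℚ ℂ A
  let := invertibleExp a
  have := spectrum.units_conjugate (R := ℂ) (a := b) (u := unitOfInvertible (exp a))
  have h : spectrum ℂ (exp a * b * exp (-a)) = spectrum ℂ b := this
  simp only [spectralRadius, h]

/-- A linear functional dominated by the spectral radius vanishes on commutators. -/
theorem apply_mul_eq_apply_mul_of_enorm_le_spectralRadius
    {A : Type*} [NormedRing A] [NormedAlgebra ℂ A] [CompleteSpace A] (φ : A →ₗ[ℂ] ℂ)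
    (hφ : ∀ a, ‖φ a‖ₑ ≤ spectralRadius ℂ a) (a b : A) : φ (a * b) = φ (b * a) := by
  have hbound : ∀ x, ‖φ x‖ ≤ ‖(1 : A)‖ * ‖x‖ := fun x => by
    have := (hφ x).trans (spectralRadius_le_enorm_mul_enorm_one x)
    rw [enorm_eq_nnnorm, enorm_eq_nnnorm, enorm_eq_nnnorm] at this
    rw [mul_comm]
    exact_mod_cast this
  let ψ : A →L[ℂ] ℂ := φ.mkContinuous _ hbound
  let f : ℂ → A := fun z => exp (z • a) * b * exp (z • -a)
  have hexp (c : A) (z : ℂ) := hasDerivAt_exp_smul_const (𝕂 := ℂ) c z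
  have hf (z : ℂ) := ((hexp a z).mul_const b).mul (hexp (-a) z)
  have hψf (z : ℂ) := ψ.hasFDerivAt.comp_hasDerivAt z (hf z)
  have hbdd : Bornology.IsBounded (Set.range (ψ ∘ f)) := by
    refine isBounded_iff_forall_norm_le.2 ⟨‖b‖ * ‖(1 : A)‖, ?_⟩
    rintro _ ⟨z, rfl⟩
    have h : ‖ψ (f z)‖ₑ ≤ ‖b‖ₑ * ‖(1 : A)‖ₑ := by
      refine (hφ (f z)).trans ?_
      simp only [f, smul_neg, spectralRadius_exp_mul_mul_exp_neg]
      exact spectralRadius_le_enorm_mul_enorm_one b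
    rw [enorm_eq_nnnorm, enorm_eq_nnnorm, enorm_eq_nnnorm] at h
    exact_mod_cast h
  have hconst : ψ ∘ f = fun _ => ψ (f 0) := funext fun z =>
    Differentiable.apply_eq_apply_of_bounded (fun z => (hψf z).differentiableAt) hbdd z 0
  have h0 : HasDerivAt (ψ ∘ f) 0 0 := hconst ▸ hasDerivAt_const 0 _
  have h := (hψf 0).unique h0
  have h' : ψ (a * b) - ψ (b * a) = 0 := by simpa [sub_eq_add_neg] using h
  exact sub_eq_zero.1 h'

/-- If `A` and `B` are complex unital semisimple Banach algebras with `B`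
commutative and there exists a unital linear bijection `T : A → B` preserving the spectral
radius, then `A` is commutative. -/
theorem domain_of_spectral_isometry_onto_commutative_is_commutative
    {A B : Type*} [NormedRing A] [NormedAlgebra ℂ A] [CompleteSpace A]
    [NormedCommRing B] [NormedAlgebra ℂ B] [CompleteSpace B]
    (hA : (⊥ : Ideal A).jacobson = ⊥) (hB : (⊥ : Ideal B).jacobson = ⊥)
    (T : A ≃ₗ[ℂ] B) (hT1 : T 1 = 1)
    (hρ : ∀ a : A, spectralRadius ℂ (T a) = spectralRadius ℂ a) :
    ∀ x y : A, x * y = y * x := by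
  intro x y
  have hχ (χ : WeakDual.characterSpace ℂ B) : χ (T (x * y - y * x)) = 0 := by
    let φ : A →ₗ[ℂ] ℂ := (WeakDual.CharacterSpace.toAlgHom χ).toLinearMap ∘ₗ T.toLinearMap
    have h : φ (x * y) = φ (y * x) :=
      apply_mul_eq_apply_mul_of_enorm_le_spectralRadius φ
        (fun a => (enorm_character_apply_le_spectralRadius χ (T a)).trans (hρ a).le) x y
    rw [map_sub, map_sub]
    exact sub_eq_zero.2 h
  have h := mem_jacobson_bot_of_forall_character_eq_zero hχ
  rw [hB, Ideal.mem_bot, T.map_eq_zero_iff] at h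
  exact sub_eq_zero.1 h
end
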